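/- (Harish-Chandra/Itzykson–Zuber formula.) Let d ≥ 1, let z ∈ ℂ with z ≠ 0, and let A and B be normal d×d complex matrices whose eigenvalues a_1,…,a_d and b_1,…,b_d (each listed with multiplicity, in some fixed order) are pairwise distinct. Then ∫_{U(d)} exp( z · tr(A U^* B U) ) dμ(U) = ( ∏_{j=1}^{d-1} j! ) · det( ( exp(z·a_j·b_k) )_{j,k=1}^d ) / ( z^{(d²-d)/2} · Δ(A) · Δ(B) ), where Δ(A) = ∏_{j>k}(a_j - a_k) and Δ(B) = ∏_{j>k}(b_j - b_k). -/

import Mathlib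

open MeasureTheory Matrix

/-- The Vandermonde product `Δ(a₁,…,a_d) = ∏_{j>k} (a_j - a_k)`. -/
noncomputable def vandermondeProd {d : ℕ} (a : Fin d → ℂ) : ℂ :=
  ∏ p ∈ Finset.univ.filter (fun p : Fin d × Fin d => p.2 < p.1), (a p.1 - a p.2)

instance HC_compact (d : ℕ) : CompactSpace (Matrix.unitaryGroup (Fin d) ℂ) := by
  apply isCompact_iff_compactSpace.mp
  have hcl : IsClosed ((Matrix.unitaryGroup (Fin d) ℂ : Submonoid (Matrix (Fin d) (Fin d) ℂ)) :
      Set (Matrix (Fin d) (Fin d) ℂ)) := by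
    have : ((Matrix.unitaryGroup (Fin d) ℂ : Submonoid (Matrix (Fin d) (Fin d) ℂ)) :
      Set (Matrix (Fin d) (Fin d) ℂ)) = {U | U * star U = 1} := by
      ext U
      exact Matrix.mem_unitaryGroup_iff
    rw [this]
    exact isClosed_eq (by fun_prop) continuous_const
  have hK : IsCompact (Set.pi Set.univ fun _ : Fin d => Set.pi Set.univ
      fun _ : Fin d => Metric.closedBall (0 : ℂ) 1) :=
    isCompact_univ_pi fun _ => isCompact_univ_pi fun _ => isCompact_closedBall _ _
  refine IsCompact.of_isClosed_subset hK hcl ?_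
  intro U hU i _ j _
  rw [mem_closedBall_zero_iff]
  exact entry_norm_bound_of_unitary hU i j

theorem HC_param {K : Type*} [TopologicalSpace K] [CompactSpace K] [MeasurableSpace K]
    [BorelSpace K] (μ : Measure K) [IsFiniteMeasure μ]
    {𝕜 : Type*} [RCLike 𝕜] {E : Type*} [NormedAddCommGroup E] [NormedSpace 𝕜 E]
    [FiniteDimensional 𝕜 E] [NormedSpace 𝕜 ℂ] [FiniteDimensional 𝕜 ℂ]
    (h : E → K → ℂ) (h' : E → K → (E →L[𝕜] ℂ))
    (hd : ∀ x k, HasFDerivAt (fun y => h y k) (h' x k) x)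
    (hc : ∀ x, Continuous (h x)) (hc' : Continuous (fun p : E × K => h' p.1 p.2)) (x₀ : E) :
    HasFDerivAt (fun x => ∫ k, h x k ∂μ) (∫ k, h' x₀ k ∂μ) x₀ := by
  have : ProperSpace E := FiniteDimensional.proper_rclike 𝕜 E
  have hcomp : IsCompact (Metric.closedBall x₀ 1 ×ˢ (Set.univ : Set K)) :=
    (isCompact_closedBall x₀ 1).prod isCompact_univ
  obtain ⟨C, hC⟩ := hcomp.exists_bound_of_continuousOn hc'.continuousOn
  have hint : ∀ x, Integrable (h x) μ := fun x => by
    obtain ⟨C, hC⟩ := (isCompact_univ (X := K)).exists_bound_of_continuousOn (hc x).continuousOn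
    exact Integrable.of_bound (hc x).aestronglyMeasurable C
      (Filter.Eventually.of_forall fun k => hC k trivial)
  refine hasFDerivAt_integral_of_dominated_of_fderiv_le (bound := fun _ => C)
    (Metric.ball_mem_nhds x₀ one_pos)
    (Filter.Eventually.of_forall fun x => (hc x).aestronglyMeasurable) (hint x₀) ?_ ?_ ?_ ?_
  · have : Continuous (h' x₀) := hc'.comp (by fun_prop : Continuous fun k => (x₀, k))
    exact this.aestronglyMeasurable
  · refine Filter.Eventually.of_forall fun k x hx => ?_
    exact hC (x, k) ⟨Metric.ball_subset_closedBall hx, trivial⟩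
  · exact integrable_const _
  · exact Filter.Eventually.of_forall fun k x _ => hd x k


noncomputable def HC_conj {d : ℕ} (A : Matrix (Fin d) (Fin d) ℂ)
    (U : Matrix.unitaryGroup (Fin d) ℂ) : Matrix (Fin d) (Fin d) ℂ :=
  (U : Matrix (Fin d) (Fin d) ℂ) * A * (U : Matrix (Fin d) (Fin d) ℂ)ᴴ

theorem HC_conj_continuous {d : ℕ} (A : Matrix (Fin d) (Fin d) ℂ) :
    Continuous (HC_conj A) := by
  unfold HC_conj
  fun_prop

noncomputable def HC_E {d : ℕ} [MeasurableSpace (Matrix.unitaryGroup (Fin d) ℂ)]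
    (μ : Measure (Matrix.unitaryGroup (Fin d) ℂ)) (A : Matrix (Fin d) (Fin d) ℂ)
    (f : Matrix (Fin d) (Fin d) ℂ → ℂ) (b : Fin d → ℂ) : ℂ :=
  ∫ U, f (HC_conj A U) * Complex.exp (∑ i, b i * HC_conj A U i i) ∂μ

theorem HC_E_hasFDerivAt {d : ℕ} [MeasurableSpace (Matrix.unitaryGroup (Fin d) ℂ)]
    [BorelSpace (Matrix.unitaryGroup (Fin d) ℂ)]
    (μ : Measure (Matrix.unitaryGroup (Fin d) ℂ)) [IsProbabilityMeasure μ]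
    (A : Matrix (Fin d) (Fin d) ℂ)
    (f : Matrix (Fin d) (Fin d) ℂ → ℂ) (hf : Continuous f) (b : Fin d → ℂ) :
    HasFDerivAt (HC_E μ A f) (∑ i, HC_E μ A (fun M => M i i * f M) b •
      (ContinuousLinearMap.proj i : (Fin d → ℂ) →L[ℂ] ℂ)) b := by
  have hM := HC_conj_continuous A
  have hMi : ∀ i, Continuous fun U => HC_conj A U i i := fun i => by fun_prop
  have hfM : Continuous fun U => f (HC_conj A U) := hf.comp hM
  have hcE : ∀ b : Fin d → ℂ, Continuous fun U => Complex.exp (∑ i, b i * HC_conj A U i i) := by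
    intro b; fun_prop
  have key := HC_param (𝕜 := ℂ) μ
    (fun (b : Fin d → ℂ) U => f (HC_conj A U) * Complex.exp (∑ i, b i * HC_conj A U i i))
    (fun b U => ∑ i, (HC_conj A U i i * f (HC_conj A U) *
      Complex.exp (∑ i, b i * HC_conj A U i i)) •
        (ContinuousLinearMap.proj i : (Fin d → ℂ) →L[ℂ] ℂ)) ?_ ?_ ?_ b
  · have : (∫ U, (∑ i, (HC_conj A U i i * f (HC_conj A U) *
      Complex.exp (∑ i, b i * HC_conj A U i i)) •
        (ContinuousLinearMap.proj i : (Fin d → ℂ) →L[ℂ] ℂ)) ∂μ) =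
        ∑ i, HC_E μ A (fun M => M i i * f M) b •
      (ContinuousLinearMap.proj i : (Fin d → ℂ) →L[ℂ] ℂ) := by
      rw [integral_finsetSum]
      · refine Finset.sum_congr rfl fun i _ => ?_
        rw [integral_smul_const]
        rfl
      · intro i _
        refine Integrable.smul_const ?_ _
        have hc : Continuous fun U => HC_conj A U i i * f (HC_conj A U) *
          Complex.exp (∑ i, b i * HC_conj A U i i) := ((hMi i).mul hfM).mul (hcE b)
        obtain ⟨C, hC⟩ := (isCompact_univ).exists_bound_of_continuousOn hc.continuousOn
        exact Integrable.of_bound hc.aestronglyMeasurable C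
          (Filter.Eventually.of_forall fun k => hC k trivial)
    rw [this] at key
    exact key
  · intro x U
    have h1 : HasFDerivAt (fun y : Fin d → ℂ => ∑ i, y i * HC_conj A U i i)
        (∑ i, HC_conj A U i i • (ContinuousLinearMap.proj i : (Fin d → ℂ) →L[ℂ] ℂ)) x := by
      refine HasFDerivAt.fun_sum fun i _ => ?_
      exact (hasFDerivAt_apply i x).mul_const _
    have h2 := (h1.cexp).const_mul (f (HC_conj A U))
    refine h2.congr_fderiv ?_
    rw [Finset.smul_sum, Finset.smul_sum]
    refine Finset.sum_congr rfl fun i _ => ?_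
    rw [smul_smul, smul_smul]
    congr 1
    ring
  · intro x
    exact hfM.mul (hcE x)
  · refine continuous_finsetSum _ fun i _ => ?_
    refine Continuous.fun_smul ?_ continuous_const
    refine Continuous.mul (((hMi i).mul hfM).comp continuous_snd) ?_
    refine Complex.continuous_exp.comp ?_
    refine continuous_finsetSum _ fun i _ => ?_
    exact ((continuous_apply i).comp continuous_fst).mul ((hMi i).comp continuous_snd)

theorem HC_E_contDiff {d : ℕ} [MeasurableSpace (Matrix.unitaryGroup (Fin d) ℂ)]
    [BorelSpace (Matrix.unitaryGroup (Fin d) ℂ)]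
    (μ : Measure (Matrix.unitaryGroup (Fin d) ℂ)) [IsProbabilityMeasure μ]
    (A : Matrix (Fin d) (Fin d) ℂ)
    (f : Matrix (Fin d) (Fin d) ℂ → ℂ) (hf : Continuous f) :
    ContDiff ℂ (⊤ : ℕ∞) (HC_E μ A f) := by
  rw [contDiff_infty]
  intro n
  induction n generalizing f with
  | zero =>
    exact contDiff_zero.2 (continuous_iff_continuousAt.2 fun b =>
      (HC_E_hasFDerivAt μ A f hf b).continuousAt)
  | succ n ih =>
    push_cast
    refine contDiff_succ_iff_hasFDerivAt.2 ⟨_, ?_, HC_E_hasFDerivAt μ A f hf⟩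
    refine ContDiff.sum fun i _ => ?_
    refine ContDiff.smul (ih _ ?_) contDiff_const
    fun_prop

section HC_SD
attribute [local instance] Matrix.linftyOpNormedRing Matrix.linftyOpNormedAlgebra

noncomputable def HC_W {d : ℕ} (K : Matrix (Fin d) (Fin d) ℂ) (t : ℝ) :
    Matrix (Fin d) (Fin d) ℂ :=
  1 + Real.sin t • K + (1 - Real.cos t) • (K * K)

theorem HC_W_mem {d : ℕ} (K : Matrix (Fin d) (Fin d) ℂ) (hK : Kᴴ = -K) (hK3 : K * K * K = -K)
    (t : ℝ) : HC_W K t ∈ Matrix.unitaryGroup (Fin d) ℂ := by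
  rw [Matrix.mem_unitaryGroup_iff, Matrix.star_eq_conjTranspose]
  have h4 : K * K * (K * K) = - (K * K) := by
    rw [← mul_assoc, hK3, neg_mul]
  have h3 : K * (K * K) = -K := by rw [← mul_assoc, hK3]
  have hW : (HC_W K t)ᴴ = 1 - Real.sin t • K + (1 - Real.cos t) • (K * K) := by
    unfold HC_W
    simp only [conjTranspose_add, conjTranspose_one, conjTranspose_smul, conjTranspose_mul, hK,
      star_trivial, neg_mul_neg, smul_neg]
    abel
  rw [hW]
  unfold HC_W
  simp only [mul_add, add_mul, mul_sub, mul_one, one_mul, smul_mul_assoc, mul_smul_comm,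
    h3, h4, hK3]
  have h := Real.sin_sq_add_cos_sq t
  have e : ∀ x y : ℝ, 1 + x • K + (1 - y) • (K * K) -
      x • (K + x • (K * K) + (1 - y) • -K) +
      (1 - y) • (K * K + x • -K + (1 - y) • -(K * K)) = 1 + (1 - (x ^ 2 + y ^ 2)) • (K * K) := by
    intro x y
    module
  rw [e, h]
  simp

theorem HC_SD_K {d : ℕ} [MeasurableSpace (Matrix.unitaryGroup (Fin d) ℂ)]
    [BorelSpace (Matrix.unitaryGroup (Fin d) ℂ)]
    (μ : Measure (Matrix.unitaryGroup (Fin d) ℂ)) [IsProbabilityMeasure μ]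
    (hμ : ∀ W : Matrix.unitaryGroup (Fin d) ℂ,
      Measure.map (fun U : Matrix.unitaryGroup (Fin d) ℂ => W * U) μ = μ)
    (A : Matrix (Fin d) (Fin d) ℂ) (K : Matrix (Fin d) (Fin d) ℂ) (hK : Kᴴ = -K)
    (hK3 : K * K * K = -K)
    (g : Matrix (Fin d) (Fin d) ℂ → ℂ) (hg : ContDiff ℂ 1 g) :
    ∫ U, fderiv ℂ g (HC_conj A U) (K * HC_conj A U - HC_conj A U * K) ∂μ = 0 := by
  set W' : ℝ → Matrix (Fin d) (Fin d) ℂ := fun t => Real.cos t • K + Real.sin t • (K * K) with hW'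
  have hWd : ∀ t, HasDerivAt (HC_W K) (W' t) t := by
    intro t
    have h1 := (Real.hasDerivAt_sin t).smul_const K
    have h2 := ((Real.hasDerivAt_cos t).const_sub 1).smul_const (K * K)
    have h3 := (h1.const_add 1).add h2
    rw [neg_neg] at h3
    exact h3
  have hWc : Continuous (HC_W K) := by unfold HC_W; fun_prop
  have hW'c : Continuous W' := by rw [hW']; fun_prop
  -- conjugate transpose curve is HC_W (-K)
  have hWstar : ∀ t, (HC_W K t)ᴴ = HC_W (-K) t := by
    intro t
    unfold HC_W
    simp only [conjTranspose_add, conjTranspose_one, conjTranspose_smul, conjTranspose_mul, hK,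
      star_trivial]
  set V' : ℝ → Matrix (Fin d) (Fin d) ℂ := fun t => Real.cos t • (-K) + Real.sin t • (-K * -K) with hV'
  have hVd : ∀ t, HasDerivAt (HC_W (-K)) (V' t) t := by
    intro t
    have h1 := (Real.hasDerivAt_sin t).smul_const (-K)
    have h2 := ((Real.hasDerivAt_cos t).const_sub 1).smul_const (-K * -K)
    have h3 := (h1.const_add 1).add h2
    rw [neg_neg] at h3
    exact h3
  have hVc : Continuous (HC_W (-K)) := by unfold HC_W; fun_prop
  have hV'c : Continuous V' := by rw [hV']; fun_prop
  have hM := HC_conj_continuous A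
  have hgc : Continuous g := hg.continuous
  have hg' : Continuous (fderiv ℂ g) := hg.continuous_fderiv (by norm_num)
  have hcont : Continuous (fun p : ℝ × Matrix.unitaryGroup (Fin d) ℂ =>
      ContinuousLinearMap.smulRight (1 : ℝ →L[ℝ] ℝ)
      (fderiv ℂ g (HC_W K p.1 * HC_conj A p.2 * HC_W (-K) p.1)
        (W' p.1 * HC_conj A p.2 * HC_W (-K) p.1 + HC_W K p.1 * HC_conj A p.2 * V' p.1))) := by
    refine (ContinuousLinearMap.smulRightL ℝ ℝ ℂ 1).continuous.comp ?_
    refine Continuous.clm_apply (hg'.comp ?_) ?_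
    · fun_prop
    · fun_prop
  have key := HC_param (𝕜 := ℝ) μ
    (fun (t : ℝ) U => g (HC_W K t * HC_conj A U * HC_W (-K) t))
    (fun t U => ContinuousLinearMap.smulRight (1 : ℝ →L[ℝ] ℝ)
      (fderiv ℂ g (HC_W K t * HC_conj A U * HC_W (-K) t)
        (W' t * HC_conj A U * HC_W (-K) t + HC_W K t * HC_conj A U * V' t))) ?_ ?_ ?_ 0
  · have hconst : (fun t : ℝ => ∫ U, g (HC_W K t * HC_conj A U * HC_W (-K) t) ∂μ) =
        fun _ => ∫ U, g (HC_conj A U) ∂μ := by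
      funext t
      have h1 : ∀ U : Matrix.unitaryGroup (Fin d) ℂ,
          HC_W K t * HC_conj A U * HC_W (-K) t =
            HC_conj A ((⟨HC_W K t, HC_W_mem K hK hK3 t⟩ : Matrix.unitaryGroup (Fin d) ℂ) * U) := by
        intro U
        rw [← hWstar]
        simp only [HC_conj, Submonoid.coe_mul, conjTranspose_mul, mul_assoc]
      simp only [h1]
      conv_rhs => rw [← hμ ⟨HC_W K t, HC_W_mem K hK hK3 t⟩]
      rw [integral_map]
      · exact (by fun_prop : Continuous fun U : Matrix.unitaryGroup (Fin d) ℂ =>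
          (⟨HC_W K t, HC_W_mem K hK hK3 t⟩ : Matrix.unitaryGroup (Fin d) ℂ) * U).aemeasurable
      · exact (hgc.comp hM).aestronglyMeasurable
    rw [hconst] at key
    have h0 := key.unique (hasFDerivAt_const _ _)
    have h1 := congrArg (fun L : ℝ →L[ℝ] ℂ => L 1) h0
    rw [ContinuousLinearMap.integral_apply] at h1
    · simp only [ContinuousLinearMap.smulRight_apply, one_apply_eq_self, one_smul,
        _root_.zero_apply] at h1
      rw [← h1]
      refine integral_congr_ae (Filter.Eventually.of_forall fun U => ?_)
      simp only [hW', hV', HC_W, Real.sin_zero, Real.cos_zero, zero_smul, one_smul, sub_self,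
        add_zero, one_mul, mul_one, mul_neg]
      rw [sub_eq_add_neg]
    · have hc := hcont.comp (by fun_prop : Continuous fun U : Matrix.unitaryGroup (Fin d) ℂ => ((0:ℝ), U))
      obtain ⟨C, hC⟩ := (isCompact_univ).exists_bound_of_continuousOn hc.continuousOn
      exact Integrable.of_bound hc.aestronglyMeasurable C
          (Filter.Eventually.of_forall fun k => hC k trivial)
  · intro t U
    have h1 := ((hWd t).mul_const (HC_conj A U)).mul (hVd t)
    have h2 : HasFDerivAt g (fderiv ℂ g (HC_W K t * HC_conj A U * HC_W (-K) t))
      (HC_W K t * HC_conj A U * HC_W (-K) t) := (hg.differentiable (by norm_num) _).hasFDerivAt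
    exact ((h2.restrictScalars ℝ).comp_hasDerivAt t h1).hasFDerivAt
  · intro t
    refine hgc.comp ?_
    fun_prop
  · exact hcont

end HC_SD

section HC_SD2
attribute [local instance] Matrix.linftyOpNormedRing Matrix.linftyOpNormedAlgebra

theorem HC_integrable {d : ℕ} [MeasurableSpace (Matrix.unitaryGroup (Fin d) ℂ)]
    [BorelSpace (Matrix.unitaryGroup (Fin d) ℂ)]
    (μ : Measure (Matrix.unitaryGroup (Fin d) ℂ)) [IsProbabilityMeasure μ]
    (f : Matrix.unitaryGroup (Fin d) ℂ → ℂ) (hc : Continuous f) : Integrable f μ := by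
  obtain ⟨C, hC⟩ := (isCompact_univ).exists_bound_of_continuousOn hc.continuousOn
  exact Integrable.of_bound hc.aestronglyMeasurable C
          (Filter.Eventually.of_forall fun k => hC k trivial)

theorem HC_SD_single {d : ℕ} [MeasurableSpace (Matrix.unitaryGroup (Fin d) ℂ)]
    [BorelSpace (Matrix.unitaryGroup (Fin d) ℂ)]
    (μ : Measure (Matrix.unitaryGroup (Fin d) ℂ)) [IsProbabilityMeasure μ]
    (hμ : ∀ W : Matrix.unitaryGroup (Fin d) ℂ,
      Measure.map (fun U : Matrix.unitaryGroup (Fin d) ℂ => W * U) μ = μ)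
    (A : Matrix (Fin d) (Fin d) ℂ) (p q : Fin d) (hpq : p ≠ q)
    (g : Matrix (Fin d) (Fin d) ℂ → ℂ) (hg : ContDiff ℂ 1 g) :
    ∫ U, fderiv ℂ g (HC_conj A U) (HC_conj A U * Matrix.single p q (1 : ℂ)
      - Matrix.single p q (1 : ℂ) * HC_conj A U) ∂μ = 0 := by
  have hqp := hpq.symm
  have e1 : (single p q (1:ℂ)) * single p q 1 = 0 := by simp [hqp]
  have e2 : (single q p (1:ℂ)) * single q p 1 = 0 := by simp [hpq]
  have e3 : (single p q (1:ℂ)) * single q p 1 = single p p 1 := by simp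
  have e4 : (single q p (1:ℂ)) * single p q 1 = single q q 1 := by simp
  have h1 := HC_SD_K μ hμ A (single p q 1 - single q p 1) (by simp) (by
    simp only [sub_mul, mul_sub, e1, e2, e3, e4]
    simp [hpq, hqp]
    abel) g hg
  have hS : (single p q (1:ℂ) + single q p 1) * (single p q 1 + single q p 1) *
      (single p q 1 + single q p 1) = single p q 1 + single q p 1 := by
    simp only [add_mul, mul_add, e1, e2, e3, e4]
    simp [hpq, hqp]
    try abel
  have h2 := HC_SD_K μ hμ A (Complex.I • (single p q 1 + single q p 1)) (by
      simp only [conjTranspose_smul, conjTranspose_add, conjTranspose_single, star_one,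
        Complex.star_def, Complex.conj_I, neg_smul]
      rw [add_comm (single q p (1:ℂ))]) (by
    rw [smul_mul_assoc, smul_mul_assoc, mul_smul_comm, mul_smul_comm, smul_mul_assoc, hS,
      smul_smul, smul_smul, Complex.I_mul_I, neg_mul, one_mul, neg_smul]
    ) g hg
  have hM := HC_conj_continuous A
  have hg' : Continuous (fderiv ℂ g) := hg.continuous_fderiv (by norm_num)
  have hi : ∀ K : Matrix (Fin d) (Fin d) ℂ, Integrable (fun U =>
      fderiv ℂ g (HC_conj A U) (K * HC_conj A U - HC_conj A U * K)) μ := by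
    intro K
    apply HC_integrable
    refine Continuous.clm_apply (hg'.comp hM) ?_
    fun_prop
  have h3 : ∫ U, ((-1/2 : ℂ) * fderiv ℂ g (HC_conj A U) ((single p q 1 - single q p 1) * HC_conj A U -
        HC_conj A U * (single p q 1 - single q p 1)) + (Complex.I / 2) *
        fderiv ℂ g (HC_conj A U) ((Complex.I • (single p q 1 + single q p 1)) * HC_conj A U -
        HC_conj A U * (Complex.I • (single p q 1 + single q p 1)))) ∂μ = 0 := by
    rw [integral_add ((hi _).const_mul _) ((hi _).const_mul _), integral_const_mul,
      integral_const_mul, h1, h2]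
    simp
  rw [← h3]
  refine integral_congr_ae (Filter.Eventually.of_forall fun U => ?_)
  simp only [smul_mul_assoc, mul_smul_comm, ← smul_sub, map_smul, smul_eq_mul]
  have hI : Complex.I / 2 * Complex.I = -1/2 := by
    rw [div_mul_eq_mul_div, Complex.I_mul_I]
  rw [← mul_assoc, hI, ← mul_add, ← map_add, ← smul_eq_mul (-1/2 : ℂ), ← map_smul]
  congr 1
  simp only [sub_mul, mul_sub, add_mul, mul_add]
  module

theorem HC_entry_contDiff {d : ℕ} (i j : Fin d) :
    ContDiff ℂ 1 (fun M : Matrix (Fin d) (Fin d) ℂ => M i j) :=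
  ((Matrix.entryLinearMap ℂ ℂ i j).toContinuousLinearMap).contDiff

theorem HC_det_contDiff {d n : ℕ} (F : Matrix (Fin d) (Fin d) ℂ → Matrix (Fin n) (Fin n) ℂ)
    (hF : ∀ i j, ContDiff ℂ 1 (fun M => F M i j)) : ContDiff ℂ 1 (fun M => (F M).det) := by
  simp only [Matrix.det_apply]
  refine ContDiff.sum fun σ _ => ?_
  refine ContDiff.const_smul _ ?_
  exact contDiff_prod fun i _ => hF _ _

theorem HC_adj_contDiff {d n : ℕ} (F : Matrix (Fin d) (Fin d) ℂ → Matrix (Fin n) (Fin n) ℂ)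
    (hF : ∀ i j, ContDiff ℂ 1 (fun M => F M i j)) (p q : Fin n) :
    ContDiff ℂ 1 (fun M => (F M).adjugate p q) := by
  simp only [Matrix.adjugate_apply]
  refine HC_det_contDiff _ fun i j => ?_
  simp only [Matrix.updateRow_apply]
  split_ifs
  · exact contDiff_const
  · exact hF _ _

theorem HC_mul_single_sub {d n : ℕ} (Y : Matrix (Fin d) (Fin d) ℂ) (s : Fin n → Fin d)
    (hs : Function.Injective s) (p q : Fin n) :
    (Y * single (s p) (s q) (1:ℂ)).submatrix s s = Y.submatrix s s * single p q 1 := by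
  ext a c
  simp only [submatrix_apply, Matrix.mul_apply, single_apply]
  rw [Finset.sum_eq_single (s p), Finset.sum_eq_single p]
  · simp [hs.eq_iff]
  · intro x _ hx
    simp [hx.symm]
  · simp
  · intro x _ hx
    simp [hx.symm]
  · simp

theorem HC_single_mul_sub {d n : ℕ} (Y : Matrix (Fin d) (Fin d) ℂ) (s : Fin n → Fin d)
    (hs : Function.Injective s) (p q : Fin n) :
    (single (s p) (s q) (1:ℂ) * Y).submatrix s s = single p q 1 * Y.submatrix s s := by
  ext a c
  simp only [submatrix_apply, Matrix.mul_apply, single_apply]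
  rw [Finset.sum_eq_single (s q), Finset.sum_eq_single q]
  · simp [hs.eq_iff]
  · intro x _ hx
    simp [hx.symm]
  · simp
  · intro x _ hx
    simp [hx.symm]
  · simp

theorem HC_adj_conj {n : ℕ} (N : Matrix (Fin n) (Fin n) ℂ) (j m : Fin n) (hjm : j ≠ m) (ε : ℂ) :
    ((1 - ε • single j m (1:ℂ)) * N * (1 + ε • single j m (1:ℂ))).adjugate =
      (1 - ε • single j m (1:ℂ)) * N.adjugate * (1 + ε • single j m (1:ℂ)) := by
  have e1 : (single j m (1:ℂ)) * single j m 1 = 0 := by simp [hjm.symm]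
  have hPQ : ∀ ε : ℂ, (1 + ε • single j m (1:ℂ)) * (1 - ε • single j m (1:ℂ)) = 1 := by
    intro ε
    simp only [mul_sub, add_mul, mul_one, one_mul, smul_mul_assoc, mul_smul_comm, e1, smul_zero]
    simp
  have hdet : ∀ ε : ℂ, (1 + ε • single j m (1:ℂ)).det = 1 := by
    intro ε
    have := det_transvection_of_ne j m hjm ε
    rwa [transvection, ← mul_one ε, ← smul_eq_mul, ← smul_single] at this
  have hadj : ∀ ε : ℂ, (1 + ε • single j m (1:ℂ)).adjugate = (1 - ε • single j m (1:ℂ)) := by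
    intro ε
    calc (1 + ε • single j m (1:ℂ)).adjugate
        = (1 + ε • single j m (1:ℂ)).adjugate * ((1 + ε • single j m (1:ℂ)) *
          (1 - ε • single j m (1:ℂ))) := by rw [hPQ, mul_one]
      _ = _ := by rw [← mul_assoc, adjugate_mul, hdet, one_smul, one_mul]
  have hadj2 : (1 - ε • single j m (1:ℂ)).adjugate = (1 + ε • single j m (1:ℂ)) := by
    have := hadj (-ε)
    rwa [neg_smul, sub_neg_eq_add, ← sub_eq_add_neg] at this
  rw [adjugate_mul_distrib, adjugate_mul_distrib, hadj, hadj2, mul_assoc]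

end HC_SD2

section HC_SD3
attribute [local instance] Matrix.linftyOpNormedRing Matrix.linftyOpNormedAlgebra

theorem HC_curve_apply {n : ℕ} (Y : Matrix (Fin n) (Fin n) ℂ) (j m : Fin n) (ε : ℂ) (a c : Fin n) :
    ((1 - ε • single j m (1:ℂ)) * Y * (1 + ε • single j m (1:ℂ))) a c =
      Y a c + ε * (if c = m then Y a j else 0) - ε * (if a = j then Y m c else 0)
        - ε ^ 2 * (if a = j then (if c = m then Y m j else 0) else 0) := by
  have h1 : ∀ (Z : Matrix (Fin n) (Fin n) ℂ) (a c : Fin n), (Z * single j m (1:ℂ)) a c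
      = if c = m then Z a j else 0 := by
    intro Z a c
    by_cases h : c = m
    · subst h; simp
    · simp [h]
  have h2 : ∀ (Z : Matrix (Fin n) (Fin n) ℂ) (a c : Fin n), (single j m (1:ℂ) * Z) a c
      = if a = j then Z m c else 0 := by
    intro Z a c
    by_cases h : a = j
    · subst h; simp
    · simp [h]
  simp only [sub_mul, mul_add, mul_one, one_mul, smul_mul_assoc, mul_smul_comm, Matrix.sub_apply,
    Matrix.add_apply, Matrix.smul_apply, h1, h2, smul_eq_mul]
  split_ifs <;> ring

/-- the shifted minor -/
noncomputable def HC_N {d n : ℕ} (s : Fin n → Fin d) (t : ℂ) (M : Matrix (Fin d) (Fin d) ℂ) :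
    Matrix (Fin n) (Fin n) ℂ := (M + t • (1 : Matrix (Fin d) (Fin d) ℂ)).submatrix s s

theorem HC_N_contDiff {d n : ℕ} (s : Fin n → Fin d) (t : ℂ) (i j : Fin n) :
    ContDiff ℂ 1 (fun M : Matrix (Fin d) (Fin d) ℂ => HC_N s t M i j) := by
  have := (HC_entry_contDiff (s i) (s j)).add
    (contDiff_const (c := (t • (1 : Matrix (Fin d) (Fin d) ℂ)) (s i) (s j)))
  exact this

theorem HC_N_curve {d n : ℕ} (s : Fin n → Fin d) (hs : Function.Injective s)
    (t : ℂ) (M : Matrix (Fin d) (Fin d) ℂ) (j m : Fin n) (hjm : j ≠ m) (ε : ℂ) :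
    HC_N s t ((1 - ε • single (s j) (s m) (1:ℂ)) * M * (1 + ε • single (s j) (s m) (1:ℂ))) =
    (1 - ε • single j m (1:ℂ)) * HC_N s t M * (1 + ε • single j m (1:ℂ)) := by
  have hne : s j ≠ s m := fun h => hjm (hs h)
  ext a c
  rw [HC_curve_apply]
  simp only [HC_N, submatrix_apply, Matrix.add_apply, HC_curve_apply, hs.eq_iff, Matrix.smul_apply, smul_eq_mul,
    one_apply]
  by_cases h1 : c = m <;> by_cases h2 : a = j
  · simp [h1, h2, hjm, hjm.symm]; ring
  · simp [h1, h2, hjm, hjm.symm]; try ring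
  · have h3 : m ≠ c := fun h => h1 h.symm
    simp [h1, h2, h3]; try ring
  · simp [h1, h2]

theorem HC_SD_minor {d n : ℕ} [MeasurableSpace (Matrix.unitaryGroup (Fin d) ℂ)]
    [BorelSpace (Matrix.unitaryGroup (Fin d) ℂ)]
    (μ : Measure (Matrix.unitaryGroup (Fin d) ℂ)) [IsProbabilityMeasure μ]
    (hμ : ∀ W : Matrix.unitaryGroup (Fin d) ℂ,
      Measure.map (fun U : Matrix.unitaryGroup (Fin d) ℂ => W * U) μ = μ)
    (A : Matrix (Fin d) (Fin d) ℂ) (s : Fin n → Fin d) (hs : Function.Injective s) (t : ℂ)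
    (j m : Fin n) (hjm : j ≠ m) (b : Fin d → ℂ) :
    (b (s m) - b (s j)) * HC_E μ A (fun M => HC_N s t M m j * (HC_N s t M).adjugate j m) b
      = HC_E μ A (fun M => (HC_N s t M).adjugate m m) b
        - HC_E μ A (fun M => (HC_N s t M).adjugate j j) b := by
  have hne : s j ≠ s m := fun h => hjm (hs h)
  have hadj := HC_adj_contDiff (HC_N (d := d) s t) (HC_N_contDiff s t)
  have hexp : ContDiff ℂ 1 (fun M : Matrix (Fin d) (Fin d) ℂ => Complex.exp (∑ i, b i * M i i)) := by
    refine ContDiff.cexp ?_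
    exact ContDiff.sum fun i _ => contDiff_const.mul (HC_entry_contDiff i i)
  set g : Matrix (Fin d) (Fin d) ℂ → ℂ := fun M => (HC_N s t M).adjugate j m *
    Complex.exp (∑ i, b i * M i i) with hgdef
  have hg : ContDiff ℂ 1 g := (hadj j m).mul hexp
  have key := HC_SD_single μ hμ A (s j) (s m) hne g hg
  have hder : ∀ M : Matrix (Fin d) (Fin d) ℂ, fderiv ℂ g M (M * single (s j) (s m) (1:ℂ) -
      single (s j) (s m) (1:ℂ) * M) = ((HC_N s t M).adjugate j j - (HC_N s t M).adjugate m m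
        + (b (s m) - b (s j)) * (HC_N s t M m j * (HC_N s t M).adjugate j m)) *
        Complex.exp (∑ i, b i * M i i) := by
    intro M
    set c : ℂ → Matrix (Fin d) (Fin d) ℂ := fun ε =>
      (1 - ε • single (s j) (s m) (1:ℂ)) * M * (1 + ε • single (s j) (s m) (1:ℂ)) with hc
    have hc0 : c 0 = M := by simp [hc]
    have hcd : HasDerivAt c (M * single (s j) (s m) (1:ℂ) - single (s j) (s m) (1:ℂ) * M) 0 := by
      have h1 : HasDerivAt (fun ε : ℂ => 1 - ε • single (s j) (s m) (1:ℂ))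
          (-single (s j) (s m) (1:ℂ)) 0 := by
        have := ((hasDerivAt_id (0:ℂ)).smul_const (single (s j) (s m) (1:ℂ))).const_sub 1
        exact this.congr_deriv (by simp)
      have h2 : HasDerivAt (fun ε : ℂ => 1 + ε • single (s j) (s m) (1:ℂ))
          (single (s j) (s m) (1:ℂ)) 0 := by
        have := ((hasDerivAt_id (0:ℂ)).smul_const (single (s j) (s m) (1:ℂ))).const_add 1
        exact this.congr_deriv (by simp)
      have := (h1.mul_const M).mul h2
      refine this.congr_deriv ?_
      simp
      abel
    have h3 : HasDerivAt (g ∘ c) (fderiv ℂ g M (M * single (s j) (s m) (1:ℂ) -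
      single (s j) (s m) (1:ℂ) * M)) 0 := by
      have h4 := ((hg.differentiable (by norm_num)) (c 0)).hasFDerivAt.comp_hasDerivAt 0 hcd
      rwa [hc0] at h4
    have hgc : g ∘ c = fun ε : ℂ => ((HC_N s t M).adjugate j m +
        ε * ((HC_N s t M).adjugate j j - (HC_N s t M).adjugate m m) -
        ε ^ 2 * (HC_N s t M).adjugate m j) * Complex.exp ((∑ i, b i * M i i) +
          ε * ((b (s m) - b (s j)) * HC_N s t M m j)) := by
      funext ε
      simp only [Function.comp, hgdef, hc, HC_N_curve s hs t M j m hjm ε, HC_adj_conj _ j m hjm ε]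
      congr 1
      · rw [HC_curve_apply]; simp; ring
      · congr 1
        have hN : HC_N s t M m j = M (s m) (s j) := by
          simp [HC_N, hne.symm]
        rw [hN]
        have : ∀ i, b i * ((1 - ε • single (s j) (s m) (1:ℂ)) * M *
          (1 + ε • single (s j) (s m) (1:ℂ))) i i = b i * M i i +
            (ε * (if i = s m then b i * M i (s j) else 0) - ε * (if i = s j then b i * M (s m) i else 0)) := by
          intro i
          rw [HC_curve_apply]
          by_cases h1 : i = s m
          · have : i ≠ s j := fun h => hne (h.symm.trans h1)
            simp [h1, hne.symm]; ring
          · simp [h1]; split_ifs <;> ring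
        simp only [this, Finset.sum_add_distrib, Finset.sum_sub_distrib, ← Finset.mul_sum]
        simp
        ring
    rw [hgc] at h3
    refine h3.unique ?_
    have e1 : HasDerivAt (fun ε : ℂ => (HC_N s t M).adjugate j m +
        ε * ((HC_N s t M).adjugate j j - (HC_N s t M).adjugate m m) -
        ε ^ 2 * (HC_N s t M).adjugate m j) ((HC_N s t M).adjugate j j - (HC_N s t M).adjugate m m) 0 := by
      have := (((hasDerivAt_id (0:ℂ)).mul_const ((HC_N s t M).adjugate j j -
        (HC_N s t M).adjugate m m)).const_add ((HC_N s t M).adjugate j m)).sub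
        (((hasDerivAt_id (0:ℂ)).pow 2).mul_const ((HC_N s t M).adjugate m j))
      refine this.congr_deriv ?_
      simp
    have e2 : HasDerivAt (fun ε : ℂ => Complex.exp ((∑ i, b i * M i i) +
          ε * ((b (s m) - b (s j)) * HC_N s t M m j))) (Complex.exp (∑ i, b i * M i i) *
            ((b (s m) - b (s j)) * HC_N s t M m j)) 0 := by
      have := (((hasDerivAt_id (0:ℂ)).mul_const
        ((b (s m) - b (s j)) * HC_N s t M m j)).const_add (∑ i, b i * M i i)).cexp
      refine this.congr_deriv ?_
      simp
    refine (e1.mul e2).congr_deriv ?_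
    simp
    ring
  have hM := HC_conj_continuous A
  have hi : ∀ f : Matrix (Fin d) (Fin d) ℂ → ℂ, Continuous f → Integrable (fun U =>
      f (HC_conj A U) * Complex.exp (∑ i, b i * HC_conj A U i i)) μ := by
    intro f hf
    apply HC_integrable
    exact (hf.comp hM).mul (hexp.continuous.comp hM)
  have hNc : Continuous fun M : Matrix (Fin d) (Fin d) ℂ => HC_N s t M m j :=
    (HC_N_contDiff s t m j).continuous
  simp only [hder] at key
  have h5 : ∀ M : Matrix (Fin d) (Fin d) ℂ, ((HC_N s t M).adjugate j j - (HC_N s t M).adjugate m m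
        + (b (s m) - b (s j)) * (HC_N s t M m j * (HC_N s t M).adjugate j m)) *
        Complex.exp (∑ i, b i * M i i) =
      ((HC_N s t M).adjugate j j * Complex.exp (∑ i, b i * M i i) - (HC_N s t M).adjugate m m *
         Complex.exp (∑ i, b i * M i i)) + (b (s m) - b (s j)) *
         ((HC_N s t M m j * (HC_N s t M).adjugate j m) * Complex.exp (∑ i, b i * M i i)) := by
    intro M; ring
  simp only [h5] at key
  have i1 := hi _ (hadj j j).continuous
  have i2 := hi _ (hadj m m).continuous
  have i3 := hi _ (hNc.fun_mul (hadj j m).continuous)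
  have i12 : Integrable (fun U => (HC_N s t (HC_conj A U)).adjugate j j *
      Complex.exp (∑ i, b i * HC_conj A U i i) - (HC_N s t (HC_conj A U)).adjugate m m *
      Complex.exp (∑ i, b i * HC_conj A U i i)) μ := i1.sub i2
  rw [integral_add i12 (i3.const_mul _), integral_sub i1 i2, integral_const_mul] at key
  unfold HC_E
  linear_combination key

end HC_SD3

theorem HC_lemmaV {n : ℕ} (v : Fin (n+1) → ℂ) (q : Polynomial ℂ) (hq : q.natDegree ≤ n) :
    ∑ m : Fin (n+1), (-1 : ℂ) ^ ((m : ℕ) + n) * q.eval (v m) *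
      (vandermonde (v ∘ m.succAbove)).det = q.coeff n * (vandermonde v).det := by
  have h := Matrix.det_updateCol_sum (vandermonde v) (Fin.last n) (fun k => q.coeff k)
  rw [det_succ_column _ (Fin.last n)] at h
  simp only [Fin.val_last, smul_eq_mul] at h
  rw [← h]
  refine Finset.sum_congr rfl fun m _ => ?_
  congr 1
  · congr 1
    simp only [updateCol_self, vandermonde_apply]
    rw [Polynomial.eval_eq_sum_range' (Nat.lt_succ_of_le hq), ← Fin.sum_univ_eq_sum_range
      (fun i => q.coeff i * v m ^ i)]
  · congr 1
    ext i j
    simp [vandermonde_apply, updateCol_apply, Fin.succAbove_last, Fin.castSucc_ne_last]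

theorem HC_dense_inj (d : ℕ) : Dense {b : Fin d → ℂ | Function.Injective b} := by
  intro b0
  set f : ℂ → (Fin d → ℂ) := fun ε i => b0 i + ε * (i : ℂ) with hf
  have hfc : Continuous f := by
    rw [hf]; fun_prop
  set bad : Set ℂ := ⋃ i : Fin d, ⋃ j : Fin d, {(b0 j - b0 i) / ((i : ℂ) - (j : ℂ))} with hbad
  have hfin : bad.Finite := Set.finite_iUnion fun i => Set.finite_iUnion fun j => Set.finite_singleton _
  have hd : Dense badᶜ := hfin.countable.dense_compl ℂ
  have h1 : f '' badᶜ ⊆ {b : Fin d → ℂ | Function.Injective b} := by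
    rintro _ ⟨ε, hε, rfl⟩ i j hij
    by_contra hne
    apply hε
    simp only [hbad, Set.mem_iUnion, Set.mem_singleton_iff]
    refine ⟨i, j, ?_⟩
    have hn : (i : ℂ) - (j : ℂ) ≠ 0 := by
      rw [sub_ne_zero]
      intro h
      exact hne (Fin.ext (by exact_mod_cast h))
    rw [eq_div_iff hn]
    simp only [hf] at hij
    linear_combination hij
  have h2 : f 0 = b0 := by funext i; simp [hf]
  rw [← h2]
  refine closure_mono h1 ?_
  exact image_closure_subset_closure_image hfc ⟨0, hd 0, rfl⟩

section
variable {d : ℕ} [MeasurableSpace (Matrix.unitaryGroup (Fin d) ℂ)]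
    [BorelSpace (Matrix.unitaryGroup (Fin d) ℂ)]
    (μ : Measure (Matrix.unitaryGroup (Fin d) ℂ)) [IsProbabilityMeasure μ]
    (A : Matrix (Fin d) (Fin d) ℂ)

theorem HC_E_integrable (f : Matrix (Fin d) (Fin d) ℂ → ℂ) (hf : Continuous f) (b : Fin d → ℂ) :
    Integrable (fun U => f (HC_conj A U) * Complex.exp (∑ i, b i * HC_conj A U i i)) μ := by
  apply HC_integrable
  have hM := HC_conj_continuous A
  have h : Continuous fun U => ∑ i, b i * HC_conj A U i i := by fun_prop
  exact (hf.comp hM).mul (Complex.continuous_exp.comp h)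

theorem HC_E_sum {ι : Type*} (S : Finset ι) (f : ι → Matrix (Fin d) (Fin d) ℂ → ℂ)
    (hf : ∀ i ∈ S, Continuous (f i)) (b : Fin d → ℂ) :
    HC_E μ A (fun M => ∑ i ∈ S, f i M) b = ∑ i ∈ S, HC_E μ A (f i) b := by
  unfold HC_E
  simp only [Finset.sum_mul]
  exact integral_finsetSum _ fun i hi => HC_E_integrable μ A (f i) (hf i hi) b

theorem HC_E_add (f g : Matrix (Fin d) (Fin d) ℂ → ℂ)
    (hf : Continuous f) (hg : Continuous g) (b : Fin d → ℂ) :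
    HC_E μ A (fun M => f M + g M) b = HC_E μ A f b + HC_E μ A g b := by
  unfold HC_E
  simp only [add_mul]
  exact integral_add (HC_E_integrable μ A f hf b) (HC_E_integrable μ A g hg b)

theorem HC_E_const_mul (f : Matrix (Fin d) (Fin d) ℂ → ℂ) (c : ℂ) (b : Fin d → ℂ) :
    HC_E μ A (fun M => c * f M) b = c * HC_E μ A f b := by
  unfold HC_E
  simp only [mul_assoc]
  exact integral_const_mul _ _

theorem HC_N_continuous {n : ℕ} (s : Fin n → Fin d) (t : ℂ) :
    Continuous fun M : Matrix (Fin d) (Fin d) ℂ => HC_N s t M := by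
  unfold HC_N
  fun_prop

theorem HC_detN_continuous {n : ℕ} (s : Fin n → Fin d) (t : ℂ) :
    Continuous fun M : Matrix (Fin d) (Fin d) ℂ => (HC_N s t M).det :=
  (HC_N_continuous s t).matrix_det

theorem HC_adjN_diag {n : ℕ} (s : Fin (n+1) → Fin d) (t : ℂ) (M : Matrix (Fin d) (Fin d) ℂ)
    (m : Fin (n+1)) :
    (HC_N s t M).adjugate m m = (HC_N (s ∘ m.succAbove) t M).det := by
  rw [adjugate_fin_succ_eq_det_submatrix, Even.neg_one_pow ⟨_, rfl⟩, one_mul]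
  rfl

noncomputable def HC_G {n : ℕ} (s : Fin n → Fin d) (t : ℂ) : (Fin d → ℂ) → ℂ :=
  HC_E μ A (fun M => (HC_N s t M).det)

theorem HC_recursion {n : ℕ}
    (hμ : ∀ W : Matrix.unitaryGroup (Fin d) ℂ,
      Measure.map (fun U : Matrix.unitaryGroup (Fin d) ℂ => W * U) μ = μ)
    (s : Fin (n+1) → Fin d) (hs : Function.Injective s) (t : ℂ)
    (m : Fin (n+1)) (b : Fin d → ℂ) (hb : Function.Injective b) :
    HC_G μ A s t b = fderiv ℂ (HC_G μ A (s ∘ m.succAbove) t) b (Pi.single (s m) 1)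
      + t * HC_G μ A (s ∘ m.succAbove) t b
      + ∑ j ∈ Finset.univ.erase m, (HC_G μ A (s ∘ m.succAbove) t b -
          HC_G μ A (s ∘ j.succAbove) t b) / (b (s m) - b (s j)) := by
  have hNc : ∀ i j : Fin (n+1), Continuous fun M : Matrix (Fin d) (Fin d) ℂ => HC_N s t M i j := by
    intro i j
    have := HC_N_continuous s t
    fun_prop
  have hadj : ∀ i j : Fin (n+1), Continuous fun M : Matrix (Fin d) (Fin d) ℂ =>
      (HC_N s t M).adjugate i j := by
    intro i j
    have := (HC_N_continuous s t).matrix_adjugate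
    fun_prop
  have h1 : HC_G μ A s t b = ∑ j, HC_E μ A (fun M => HC_N s t M m j * (HC_N s t M).adjugate j m) b := by
    rw [← HC_E_sum μ A _ _ (fun j _ => (hNc m j).fun_mul (hadj j m))]
    unfold HC_G
    congr 1
    funext M
    exact det_eq_sum_mul_adjugate_row _ m
  rw [h1, ← Finset.add_sum_erase _ _ (Finset.mem_univ m)]
  congr 1
  · rw [HC_G, (HC_E_hasFDerivAt μ A _ (HC_detN_continuous _ t) b).fderiv]
    have : (fun M : Matrix (Fin d) (Fin d) ℂ => HC_N s t M m m * (HC_N s t M).adjugate m m) =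
      fun M => M (s m) (s m) * (HC_N (s ∘ m.succAbove) t M).det +
        t * (HC_N (s ∘ m.succAbove) t M).det := by
      funext M
      rw [HC_adjN_diag]
      simp [HC_N]
      ring
    rw [this, HC_E_add, HC_E_const_mul]
    · congr 1
      simp [Pi.single_apply]
    · have := HC_detN_continuous (s ∘ m.succAbove) t
      fun_prop
    · have := HC_detN_continuous (s ∘ m.succAbove) t
      fun_prop
  · refine Finset.sum_congr rfl fun j hj => ?_
    have hjm : j ≠ m := Finset.ne_of_mem_erase hj
    have h2 := HC_SD_minor μ hμ A s hs t j m hjm b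
    have h3 : b (s m) - b (s j) ≠ 0 := sub_ne_zero.2 fun h => hjm (hs (hb h)).symm
    simp only [HC_adjN_diag] at h2
    rw [eq_div_iff h3, mul_comm, h2]
    rfl

end

/-- smooth functions -/
noncomputable def HC_S (d : ℕ) : Subalgebra ℂ ((Fin d → ℂ) → ℂ) where
  carrier := {f | ContDiff ℂ (⊤ : ℕ∞) f}
  mul_mem' := by
    intro f g hf hg
    rw [Set.mem_ofPred_eq] at hf hg ⊢
    exact hf.mul hg
  add_mem' := by
    intro f g hf hg
    rw [Set.mem_ofPred_eq] at hf hg ⊢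
    exact hf.add hg
  algebraMap_mem' := fun c => (contDiff_const : ContDiff ℂ (⊤ : ℕ∞) fun _ : Fin d → ℂ => c)

theorem HC_S_contDiff {d : ℕ} (F : HC_S d) : ContDiff ℂ (⊤ : ℕ∞) (F : (Fin d → ℂ) → ℂ) := F.2

theorem HC_S_diff {d : ℕ} (F : HC_S d) (b : Fin d → ℂ) :
    DifferentiableAt ℂ (F : (Fin d → ℂ) → ℂ) b :=
  (HC_S_contDiff F).differentiable (by simp) b

noncomputable def HC_D {d : ℕ} (i : Fin d) : Module.End ℂ (HC_S d) where
  toFun F := ⟨fun b => fderiv ℂ (F : (Fin d → ℂ) → ℂ) b (Pi.single i 1), by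
    have h := (HC_S_contDiff F).fderiv_right (m := (⊤ : ℕ∞)) (by simp)
    exact h.clm_apply contDiff_const⟩
  map_add' F G := by
    ext b
    change fderiv ℂ ((F : (Fin d → ℂ) → ℂ) + (G : (Fin d → ℂ) → ℂ)) b _ = fderiv ℂ (F : (Fin d → ℂ) → ℂ) b _ + fderiv ℂ (G : (Fin d → ℂ) → ℂ) b _
    rw [fderiv_add (HC_S_diff F b) (HC_S_diff G b)]
    rfl
  map_smul' c F := by
    ext b
    change fderiv ℂ (c • (F : (Fin d → ℂ) → ℂ)) b _ = c * fderiv ℂ (F : (Fin d → ℂ) → ℂ) b _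
    rw [fderiv_const_smul (HC_S_diff F b)]
    rfl

theorem HC_D_apply {d : ℕ} (i : Fin d) (F : HC_S d) (b : Fin d → ℂ) :
    (HC_D i F : (Fin d → ℂ) → ℂ) b = fderiv ℂ (F : (Fin d → ℂ) → ℂ) b (Pi.single i 1) := rfl

theorem HC_D_mul {d : ℕ} (i : Fin d) (F G : HC_S d) :
    HC_D i (F * G) = HC_D i F * G + F * HC_D i G := by
  ext b
  change fderiv ℂ ((F : (Fin d → ℂ) → ℂ) * (G : (Fin d → ℂ) → ℂ)) b _ = fderiv ℂ (F : (Fin d → ℂ) → ℂ) b _ * (G : (Fin d → ℂ) → ℂ) b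
    + (F : (Fin d → ℂ) → ℂ) b * fderiv ℂ (G : (Fin d → ℂ) → ℂ) b _
  rw [fderiv_mul (HC_S_diff F b) (HC_S_diff G b)]
  simp
  ring

theorem HC_D_comm {d : ℕ} (i j : Fin d) : HC_D i * HC_D j = HC_D j * HC_D i := by
  ext F b
  have hs : IsSymmSndFDerivAt ℂ (F : (Fin d → ℂ) → ℂ) b :=
    ((HC_S_contDiff F).contDiffAt).isSymmSndFDerivAt (by simp; exact WithTop.coe_le_coe.2 (le_top : (2:ℕ∞) ≤ ⊤))
  have hd : DifferentiableAt ℂ (fderiv ℂ (F : (Fin d → ℂ) → ℂ)) b :=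
    ((HC_S_contDiff F).fderiv_right (m := (⊤ : ℕ∞)) (by simp)).differentiable (by simp) b
  have key : ∀ i j : Fin d, ((HC_D i * HC_D j) F : (Fin d → ℂ) → ℂ) b =
      fderiv ℂ (fderiv ℂ (F : (Fin d → ℂ) → ℂ)) b (Pi.single i 1) (Pi.single j 1) := by
    intro i j
    change fderiv ℂ (fun b => fderiv ℂ (F : (Fin d → ℂ) → ℂ) b (Pi.single j 1)) b (Pi.single i 1) = _
    rw [fderiv_clm_apply hd (by fun_prop)]
    simp
  change ((HC_D i * HC_D j) F : (Fin d → ℂ) → ℂ) b = ((HC_D j * HC_D i) F : (Fin d → ℂ) → ℂ) b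
  rw [key, key]
  exact hs _ _

theorem HC_alg_exists {ι R : Type*} [Ring R] [Algebra ℂ R] (D : ι → R)
    (hD : ∀ i j, D i * D j = D j * D i) : ∃ ρ : MvPolynomial ι ℂ →ₐ[ℂ] R,
    ∀ i, ρ (MvPolynomial.X i) = D i := by
  have hcomm : ∀ a ∈ Set.range D, ∀ b ∈ Set.range D, a * b = b * a := by
    rintro _ ⟨i, rfl⟩ _ ⟨j, rfl⟩
    exact hD i j
  have hc := Algebra.isMulCommutative_adjoin ℂ hcomm
  letI : CommSemiring (Algebra.adjoin ℂ (Set.range D)) :=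
    { (Algebra.adjoin ℂ (Set.range D)).toSemiring with mul_comm := hc.is_comm.comm }
  let φ : MvPolynomial ι ℂ →ₐ[ℂ] (Algebra.adjoin ℂ (Set.range D)) :=
    MvPolynomial.aeval (R := ℂ) (S₁ := Algebra.adjoin ℂ (Set.range D))
      (fun i => (⟨D i, Algebra.subset_adjoin ⟨i, rfl⟩⟩ : Algebra.adjoin ℂ (Set.range D)))
  refine ⟨(Algebra.adjoin ℂ (Set.range D)).val.comp φ, fun i => ?_⟩
  simp [φ]

theorem HC_rho_exists (d : ℕ) : ∃ ρ : MvPolynomial (Fin d) ℂ →ₐ[ℂ] Module.End ℂ (HC_S d),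
    ∀ i, ρ (MvPolynomial.X i) = HC_D i :=
  HC_alg_exists HC_D HC_D_comm

noncomputable def HC_rho (d : ℕ) : MvPolynomial (Fin d) ℂ →ₐ[ℂ] Module.End ℂ (HC_S d) :=
  (HC_rho_exists d).choose

theorem HC_rho_X {d : ℕ} (i : Fin d) : HC_rho d (MvPolynomial.X i) = HC_D i :=
  (HC_rho_exists d).choose_spec i

theorem HC_rho_C {d : ℕ} (c : ℂ) : HC_rho d (MvPolynomial.C c) = c • 1 := by
  rw [← MvPolynomial.algebraMap_eq, AlgHom.commutes, Algebra.algebraMap_eq_smul_one]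

theorem HC_S_ext_dense {d : ℕ} (F G : HC_S d) (h : ∀ b : Fin d → ℂ, Function.Injective b →
    (F : (Fin d → ℂ) → ℂ) b = (G : (Fin d → ℂ) → ℂ) b) : F = G := by
  apply Subtype.ext
  exact Continuous.ext_on (HC_dense_inj d) (HC_S_contDiff F).continuous
    (HC_S_contDiff G).continuous h

theorem HC_D_zero {d : ℕ} (i : Fin d) (F : HC_S d)
    (h : ∀ (b : Fin d → ℂ) (ε : ℂ), (F : (Fin d → ℂ) → ℂ) (b + ε • Pi.single i 1)
      = (F : (Fin d → ℂ) → ℂ) b) : HC_D i F = 0 := by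
  ext b
  rw [HC_D_apply, ← (HC_S_diff F b).lineDeriv_eq_fderiv, lineDeriv]
  simp only [h]
  simp

noncomputable def HC_poly {d : ℕ} (q : Polynomial ℂ) (i : Fin d) : HC_S d :=
  ⟨fun b => q.eval (b i), by
    have h1 : ContDiff ℂ (⊤ : ℕ∞) fun x : ℂ => q.eval x := by
      simpa using q.contDiff_aeval (𝕜 := ℂ) (⊤ : ℕ∞)
    exact h1.comp (contDiff_apply ℂ ℂ i)⟩

theorem HC_poly_apply {d : ℕ} (q : Polynomial ℂ) (i : Fin d) (b : Fin d → ℂ) :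
    (HC_poly q i : (Fin d → ℂ) → ℂ) b = q.eval (b i) := rfl

theorem HC_D_poly_ne {d : ℕ} (q : Polynomial ℂ) (i j : Fin d) (h : j ≠ i) :
    HC_D j (HC_poly q i) = 0 := by
  apply HC_D_zero
  intro b ε
  simp [HC_poly_apply, h.symm]

theorem HC_D_poly {d : ℕ} (q : Polynomial ℂ) (i : Fin d) :
    HC_D i (HC_poly q i) = HC_poly (Polynomial.derivative q) i := by
  ext b
  rw [HC_D_apply, HC_poly_apply]
  have h1 : HasFDerivAt (fun b : Fin d → ℂ => q.eval (b i)) (q.derivative.eval (b i) •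
      (ContinuousLinearMap.proj i : (Fin d → ℂ) →L[ℂ] ℂ)) b :=
    HasDerivAt.comp_hasFDerivAt (f := fun b : Fin d → ℂ => b i) b (q.hasDerivAt (b i))
      (hasFDerivAt_apply i b)
  change fderiv ℂ (fun b : Fin d → ℂ => q.eval (b i)) b _ = _
  rw [h1.fderiv]
  simp

noncomputable def HC_V {d n : ℕ} (s : Fin n → Fin d) : HC_S d :=
  ⟨fun b => (vandermonde (b ∘ s)).det, by
    change ContDiff ℂ (⊤ : ℕ∞) fun b : Fin d → ℂ => (vandermonde (b ∘ s)).det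
    simp only [Matrix.det_apply, vandermonde_apply]
    refine ContDiff.sum fun σ _ => ?_
    refine ContDiff.const_smul _ ?_
    refine contDiff_prod fun i _ => ?_
    exact (contDiff_apply ℂ ℂ (s (σ i))).pow _⟩

theorem HC_V_apply {d n : ℕ} (s : Fin n → Fin d) (b : Fin d → ℂ) :
    (HC_V s : (Fin d → ℂ) → ℂ) b = (vandermonde (b ∘ s)).det := rfl

theorem HC_D_V {d n : ℕ} (s : Fin n → Fin d) (i : Fin d) (h : ∀ k, s k ≠ i) :
    HC_D i (HC_V s) = 0 := by
  apply HC_D_zero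
  intro b ε
  rw [HC_V_apply, HC_V_apply]
  congr 2
  funext k
  simp [h k]

noncomputable def HC_P {d n : ℕ} (s : Fin n → Fin d) (t : ℂ) : MvPolynomial (Fin d) ℂ :=
  ∏ k, (MvPolynomial.X (s k) + MvPolynomial.C t)

theorem HC_rho_mul {d : ℕ} (p q : MvPolynomial (Fin d) ℂ) (F : HC_S d) :
    HC_rho d (p * q) F = HC_rho d p (HC_rho d q F) := by
  rw [map_mul (HC_rho d), Module.End.mul_apply]

theorem HC_rho_lin {d : ℕ} (i : Fin d) (t : ℂ) (F : HC_S d) :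
    HC_rho d (MvPolynomial.X i + MvPolynomial.C t) F = HC_D i F + t • F := by
  rw [map_add, HC_rho_X, HC_rho_C]
  rfl

theorem HC_P_comm {d n : ℕ} (s : Fin n → Fin d) (t : ℂ) (G : HC_S d)
    (hG : ∀ k, HC_D (s k) G = 0) (F : HC_S d) :
    HC_rho d (HC_P s t) (G * F) = G * HC_rho d (HC_P s t) F := by
  unfold HC_P
  suffices h : ∀ T : Finset (Fin n), ∀ F : HC_S d,
      HC_rho d (∏ k ∈ T, (MvPolynomial.X (s k) + MvPolynomial.C t)) (G * F) =
      G * HC_rho d (∏ k ∈ T, (MvPolynomial.X (s k) + MvPolynomial.C t)) F from h _ F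
  intro T
  induction T using Finset.induction_on with
  | empty => intro F; simp
  | insert a T ha ih =>
    intro F
    rw [Finset.prod_insert ha, HC_rho_mul, HC_rho_mul, ih,
      HC_rho_lin, HC_rho_lin, HC_D_mul, hG, zero_mul, zero_add, mul_add, mul_smul_comm]

theorem HC_final_alg {n : ℕ} (v : Fin (n+1) → ℂ) (hv : Function.Injective v)
    (w G H : Fin (n+1) → ℂ) (Δ : ℂ)
    (hw : ∀ m, w m * ∏ j ∈ Finset.univ.erase m, (v m - v j) = Δ) (q : Polynomial ℂ)
    (hq : q = Lagrange.nodal (Finset.univ.erase 0) v) :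
    ∑ m, w m * ((Polynomial.derivative q).eval (v m) * G m + q.eval (v m) * H m)
     = Δ * (H 0 + ∑ j ∈ Finset.univ.erase 0, (G 0 - G j) / (v 0 - v j)) := by
  have hne : ∀ i j, i ≠ j → v i - v j ≠ 0 := fun i j h => sub_ne_zero.2 fun h' => h (hv h')
  rw [← Finset.add_sum_erase _ _ (Finset.mem_univ 0)]
  have h0 : w 0 * q.eval (v 0) = Δ := by rw [← hw 0, hq, Lagrange.eval_nodal]
  have h1 : w 0 * (Polynomial.derivative q).eval (v 0) =
      ∑ j ∈ Finset.univ.erase 0, Δ / (v 0 - v j) := by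
    rw [hq, Lagrange.derivative_nodal, Polynomial.eval_finsetSum, Finset.mul_sum]
    refine Finset.sum_congr rfl fun j hj => ?_
    rw [eq_div_iff (hne _ _ (Finset.ne_of_mem_erase hj).symm), ← hw 0, Lagrange.eval_nodal,
      ← Finset.mul_prod_erase _ _ hj]
    ring
  have h2 : ∀ m ∈ Finset.univ.erase (0 : Fin (n+1)),
      w m * ((Polynomial.derivative q).eval (v m) * G m + q.eval (v m) * H m) =
        - (Δ * G m / (v 0 - v m)) := by
    intro m hm
    have hm0 := Finset.ne_of_mem_erase hm
    rw [hq, Lagrange.eval_nodal_derivative_eval_node_eq hm, Lagrange.eval_nodal_at_node hm,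
      Lagrange.eval_nodal, Finset.erase_right_comm, ← hw m,
      ← Finset.mul_prod_erase (Finset.univ.erase m) _ (Finset.mem_erase.2 ⟨hm0.symm, Finset.mem_univ 0⟩)]
    rw [← neg_sub (v m) (v 0), div_neg, neg_neg, eq_div_iff (hne _ _ hm0)]
    ring
  rw [Finset.sum_congr rfl h2, mul_add, ← mul_assoc, ← mul_assoc, h1, h0, mul_add, Finset.mul_sum,
    Finset.sum_mul, add_right_comm, ← Finset.sum_add_distrib, add_comm]
  congr 1
  refine Finset.sum_congr rfl fun j hj => ?_
  ring

section
variable {d : ℕ} [MeasurableSpace (Matrix.unitaryGroup (Fin d) ℂ)]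
    [BorelSpace (Matrix.unitaryGroup (Fin d) ℂ)]
    (μ : Measure (Matrix.unitaryGroup (Fin d) ℂ)) [IsProbabilityMeasure μ]
    (A : Matrix (Fin d) (Fin d) ℂ)

noncomputable def HC_GS {n : ℕ} (s : Fin n → Fin d) (t : ℂ) : HC_S d :=
  ⟨HC_G μ A s t, HC_E_contDiff μ A _ (HC_detN_continuous s t)⟩

noncomputable def HC_I : HC_S d :=
  ⟨HC_E μ A (fun _ => 1), HC_E_contDiff μ A _ continuous_const⟩

theorem HC_claim (hμ : ∀ W : Matrix.unitaryGroup (Fin d) ℂ,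
      Measure.map (fun U : Matrix.unitaryGroup (Fin d) ℂ => W * U) μ = μ) (t : ℂ) :
    ∀ (n : ℕ) (s : Fin n → Fin d), Function.Injective s →
    HC_rho d (HC_P s t) (HC_V s * HC_I μ A) = HC_V s * HC_GS μ A s t := by
  intro n
  induction n with
  | zero =>
    intro s _
    have h1 : HC_P s t = 1 := by simp [HC_P]
    have h2 : HC_GS μ A s t = HC_I μ A := by
      apply Subtype.ext
      simp [HC_GS, HC_G, HC_I]
    rw [h1, h2, map_one, Module.End.one_apply]
  | succ n ih =>
    intro s hs
    apply HC_S_ext_dense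
    intro b hb
    set v : Fin (n+1) → ℂ := b ∘ s with hv
    have hvi : Function.Injective v := hb.comp hs
    set q := Lagrange.nodal (Finset.univ.erase (0 : Fin (n+1))) v with hq
    have hdeg : ∀ m : Fin (n+1), (Lagrange.nodal (Finset.univ.erase m) v).natDegree = n := by
      intro m
      rw [Lagrange.natDegree_nodal]
      simp
    have hco : ∀ m : Fin (n+1), (Lagrange.nodal (Finset.univ.erase m) v).coeff n = 1 := by
      intro m
      have := (Lagrange.nodal_monic (s := Finset.univ.erase m) (v := v)).coeff_natDegree
      rwa [hdeg] at this
    set κ : Fin (n+1) → ℂ := fun m => (-1 : ℂ) ^ ((m : ℕ) + n) with hκ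
    have hsm : ∀ m : Fin (n+1), Function.Injective (s ∘ m.succAbove) := fun m =>
      hs.comp Fin.succAbove_right_injective
    have hV : HC_V s = ∑ m, κ m • (HC_poly q (s m) * HC_V (s ∘ m.succAbove)) := by
      ext x
      have h := HC_lemmaV (x ∘ s) q (hdeg 0).le
      rw [hco 0, one_mul] at h
      rw [HC_V_apply, ← h]
      simp only [AddSubmonoidClass.coe_finsetSum, Finset.sum_apply]
      refine Finset.sum_congr rfl fun m _ => ?_
      rw [mul_assoc]
      rfl
    have hstep : HC_rho d (HC_P s t) (HC_V s * HC_I μ A) =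
        ∑ m, κ m • (HC_poly (Polynomial.derivative q) (s m) * (HC_V (s ∘ m.succAbove) *
          HC_GS μ A (s ∘ m.succAbove) t) + HC_poly q (s m) * (HC_V (s ∘ m.succAbove) *
          (HC_D (s m) (HC_GS μ A (s ∘ m.succAbove) t) + t • HC_GS μ A (s ∘ m.succAbove) t))) := by
      rw [hV, Finset.sum_mul, map_sum]
      refine Finset.sum_congr rfl fun m _ => ?_
      rw [smul_mul_assoc, map_smul]
      congr 1
      have hP : HC_P s t = (MvPolynomial.X (s m) + MvPolynomial.C t) * HC_P (s ∘ m.succAbove) t := by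
        unfold HC_P
        rw [Fin.prod_univ_succAbove _ m]
        rfl
      rw [hP, HC_rho_mul, mul_assoc, HC_P_comm (s ∘ m.succAbove) _ _ (fun k => HC_D_poly_ne _ _ _
        (fun h => Fin.succAbove_ne m k (hs h))), ih _ (hsm m), HC_rho_lin, HC_D_mul, HC_D_poly,
        HC_D_mul, HC_D_V (s ∘ m.succAbove) _ (fun k h => Fin.succAbove_ne m k (hs h)), zero_mul, zero_add,
        add_assoc, ← mul_smul_comm, ← mul_smul_comm, ← mul_add, ← mul_add]
    rw [hstep]
    have hfin := HC_final_alg v hvi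
      (fun m => κ m * (vandermonde (v ∘ m.succAbove)).det)
      (fun m => HC_G μ A (s ∘ m.succAbove) t b)
      (fun m => fderiv ℂ (HC_G μ A (s ∘ m.succAbove) t) b (Pi.single (s m) 1)
        + t * HC_G μ A (s ∘ m.succAbove) t b) (vandermonde v).det (by
        intro m
        have h := HC_lemmaV v _ (hdeg m).le
        rw [hco m, one_mul] at h
        rw [← h, Finset.sum_eq_single m]
        · rw [Lagrange.eval_nodal]
          ring
        · intro l _ hl
          rw [Lagrange.eval_nodal_at_node (Finset.mem_erase.2 ⟨hl, Finset.mem_univ l⟩)]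
          ring
        · simp) q hq
    have hrec := HC_recursion μ A hμ s hs t 0 b hb
    change _ = (vandermonde v).det * HC_G μ A s t b
    rw [hrec]
    refine Eq.trans ?_ hfin
    simp only [AddSubmonoidClass.coe_finsetSum, Finset.sum_apply]
    refine Finset.sum_congr rfl fun m _ => ?_
    change κ m * (q.derivative.eval (v m) * ((vandermonde (v ∘ m.succAbove)).det *
      HC_G μ A (s ∘ m.succAbove) t b) + q.eval (v m) * ((vandermonde (v ∘ m.succAbove)).det *
        (fderiv ℂ (HC_G μ A (s ∘ m.succAbove) t) b (Pi.single (s m) 1)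
        + t * HC_G μ A (s ∘ m.succAbove) t b))) = _
    ring

end

theorem HC_det_conj {d : ℕ} (W : Matrix.unitaryGroup (Fin d) ℂ) (X : Matrix (Fin d) (Fin d) ℂ) (t : ℂ) :
    ((W : Matrix (Fin d) (Fin d) ℂ) * X * (W : Matrix (Fin d) (Fin d) ℂ)ᴴ
      + t • (1 : Matrix (Fin d) (Fin d) ℂ)).det = (X + t • (1 : Matrix (Fin d) (Fin d) ℂ)).det := by
  have hW : (W : Matrix (Fin d) (Fin d) ℂ) * (W : Matrix (Fin d) (Fin d) ℂ)ᴴ = 1 :=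
    Matrix.mem_unitaryGroup_iff.1 W.2
  have : (W : Matrix (Fin d) (Fin d) ℂ) * X * (W : Matrix (Fin d) (Fin d) ℂ)ᴴ
      + t • (1 : Matrix (Fin d) (Fin d) ℂ) = (W : Matrix (Fin d) (Fin d) ℂ) *
        (X + t • (1 : Matrix (Fin d) (Fin d) ℂ)) * (W : Matrix (Fin d) (Fin d) ℂ)ᴴ := by
    rw [mul_add, add_mul, mul_smul_comm, mul_one, smul_mul_assoc, hW]
  rw [this, det_mul, det_mul, mul_right_comm, ← det_mul, hW, det_one, one_mul]

theorem HC_coeff_kill {d : ℕ} (F : HC_S d) (q : Polynomial (MvPolynomial (Fin d) ℂ))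
    (h : ∀ t : ℂ, HC_rho d (q.eval (MvPolynomial.C t)) F = 0) (x : MvPolynomial (Fin d) ℂ) :
    HC_rho d (q.eval x) F = 0 := by
  have hk : ∀ k, HC_rho d (q.coeff k) F = 0 := by
    intro k
    ext b
    by_cases hkn : k ∈ Finset.range (q.natDegree + 1)
    swap
    · rw [Polynomial.coeff_eq_zero_of_natDegree_lt (by simpa using hkn)]
      simp
    set r : Polynomial ℂ := ∑ k ∈ Finset.range (q.natDegree + 1),
      Polynomial.monomial k ((HC_rho d (q.coeff k) F : (Fin d → ℂ) → ℂ) b) with hr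
    have hr0 : r = 0 := by
      apply Polynomial.funext
      intro t
      have ht := congrArg (fun G : HC_S d => (G : (Fin d → ℂ) → ℂ) b) (h t)
      rw [hr, Polynomial.eval_finsetSum, Polynomial.eval_zero]
      rw [Polynomial.eval_eq_sum_range] at ht
      simp only [map_sum, LinearMap.sum_apply, AddSubmonoidClass.coe_finsetSum,
        Finset.sum_apply] at ht
      refine Eq.trans (Finset.sum_congr rfl fun k _ => ?_) ht
      rw [mul_comm (q.coeff k), HC_rho_mul, ← MvPolynomial.C_pow, HC_rho_C,
        Polynomial.eval_monomial, mul_comm]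
      rfl
    have := congrArg (fun p => Polynomial.coeff p k) hr0
    simp only [hr, Polynomial.finsetSum_coeff, Polynomial.coeff_monomial] at this
    rw [Finset.sum_ite_eq' , if_pos hkn] at this
    exact this
  rw [Polynomial.eval_eq_sum_range, map_sum, LinearMap.sum_apply]
  refine Finset.sum_eq_zero fun k _ => ?_
  rw [mul_comm (q.coeff k), HC_rho_mul, hk, map_zero]

section
variable {d : ℕ} [MeasurableSpace (Matrix.unitaryGroup (Fin d) ℂ)]
    [BorelSpace (Matrix.unitaryGroup (Fin d) ℂ)]
    (μ : Measure (Matrix.unitaryGroup (Fin d) ℂ)) [IsProbabilityMeasure μ]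
    (A : Matrix (Fin d) (Fin d) ℂ)

theorem HC_kill (hμ : ∀ W : Matrix.unitaryGroup (Fin d) ℂ,
      Measure.map (fun U : Matrix.unitaryGroup (Fin d) ℂ => W * U) μ = μ) (a : Fin d → ℂ)
    (hA : ∃ W : Matrix.unitaryGroup (Fin d) ℂ,
      A = (W : Matrix (Fin d) (Fin d) ℂ) * Matrix.diagonal a * (W : Matrix (Fin d) (Fin d) ℂ)ᴴ)
    (i : Fin d) :
    HC_rho d (∏ j, (MvPolynomial.X i - MvPolynomial.C (a j))) (HC_V id * HC_I μ A) = 0 := by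
  set F := HC_V id * HC_I μ A with hF
  have h1 : ∀ t : ℂ, HC_rho d (HC_P id t) F = (∏ j, (t + a j)) • F := by
    intro t
    rw [hF, HC_claim μ A hμ t d id Function.injective_id, ← mul_smul_comm]
    congr 1
    ext b
    change HC_E μ A (fun M => (HC_N id t M).det) b = _ * HC_E μ A (fun _ => 1) b
    rw [← HC_E_const_mul]
    unfold HC_E
    congr 1
    funext U
    congr 1
    obtain ⟨W, rfl⟩ := hA
    unfold HC_N HC_conj
    beta_reduce
    rw [submatrix_id_id, HC_det_conj, HC_det_conj, smul_one_eq_diagonal, diagonal_add, det_diagonal, mul_one]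
    simp [add_comm]
  have h2 := HC_coeff_kill F (∏ j, (Polynomial.X + Polynomial.C (MvPolynomial.X j)) -
    ∏ j, (Polynomial.X + Polynomial.C (MvPolynomial.C (a j)))) (by
      intro t
      have h3 := h1 t
      rw [Polynomial.eval_sub, Polynomial.eval_prod, Polynomial.eval_prod, map_sub,
        LinearMap.sub_apply, sub_eq_zero]
      simp only [Polynomial.eval_add, Polynomial.eval_X, Polynomial.eval_C]
      have h4 : HC_P id t = ∏ j : Fin d, (MvPolynomial.C t + MvPolynomial.X j) := by
        simp [HC_P, add_comm]
      rw [← h4, h3]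
      simp only [← MvPolynomial.C_add]
      rw [← map_prod, HC_rho_C]
      rfl) (-MvPolynomial.X i)
  rw [Polynomial.eval_sub, Polynomial.eval_prod, Polynomial.eval_prod] at h2
  rw [Finset.prod_eq_zero (Finset.mem_univ i) (by simp), zero_sub, map_neg, LinearMap.neg_apply,
    neg_eq_zero] at h2
  have h5 : ∏ j, (MvPolynomial.X i - MvPolynomial.C (a j)) = (MvPolynomial.C ((-1) ^ d) :
      MvPolynomial (Fin d) ℂ) *
      ∏ j, Polynomial.eval (-MvPolynomial.X i) (Polynomial.X + Polynomial.C (MvPolynomial.C (a j))) := by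
    have : ∀ j, (MvPolynomial.X i - MvPolynomial.C (a j) : MvPolynomial (Fin d) ℂ) = (-1) *
      Polynomial.eval (-MvPolynomial.X i) (Polynomial.X + Polynomial.C (MvPolynomial.C (a j))) := by
      intro j; simp; ring
    simp only [this, Finset.prod_mul_distrib]
    simp
  rw [h5, HC_rho_mul, h2, map_zero]

end

noncomputable def HC_exp {d : ℕ} (c : Fin d → ℂ) : HC_S d :=
  ⟨fun b => Complex.exp (∑ i, c i * b i), by
    have h : ContDiff ℂ (⊤ : ℕ∞) fun b : Fin d → ℂ => ∑ i, c i * b i :=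
      ContDiff.sum fun i _ => contDiff_const.mul (contDiff_apply ℂ ℂ i)
    exact h.cexp⟩

theorem HC_exp_apply {d : ℕ} (c b : Fin d → ℂ) :
    (HC_exp c : (Fin d → ℂ) → ℂ) b = Complex.exp (∑ i, c i * b i) := rfl

theorem HC_D_exp {d : ℕ} (c : Fin d → ℂ) (i : Fin d) : HC_D i (HC_exp c) = c i • HC_exp c := by
  ext b
  rw [HC_D_apply]
  have h1 : HasFDerivAt (fun y : Fin d → ℂ => ∑ i, c i * y i)
      (∑ i, c i • (ContinuousLinearMap.proj i : (Fin d → ℂ) →L[ℂ] ℂ)) b := by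
    refine HasFDerivAt.fun_sum fun i _ => ?_
    exact (hasFDerivAt_apply i b).const_mul _
  have h2 := h1.cexp
  change fderiv ℂ (fun b : Fin d → ℂ => Complex.exp (∑ i, c i * b i)) b _ =
    c i * Complex.exp (∑ i, c i * b i)
  rw [h2.fderiv]
  simp [Pi.single_apply, mul_comm]

theorem HC_eigen {d : ℕ} (F : HC_S d) (c : Fin d → ℂ) (h : ∀ i, HC_D i F = c i • F)
    (b : Fin d → ℂ) : (F : (Fin d → ℂ) → ℂ) b = (F : (Fin d → ℂ) → ℂ) 0 *
      Complex.exp (∑ i, c i * b i) := by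
  set H : HC_S d := F * HC_exp (-c) with hH
  have hD : ∀ i, HC_D i H = 0 := by
    intro i
    rw [hH, HC_D_mul, h, HC_D_exp, Pi.neg_apply, smul_mul_assoc, mul_smul_comm, neg_smul,
      add_neg_cancel]
  have hf : ∀ x, fderiv ℂ (H : (Fin d → ℂ) → ℂ) x = 0 := by
    intro x
    refine ContinuousLinearMap.coe_injective (LinearMap.pi_ext' fun i => LinearMap.ext_ring ?_)
    have := congrArg (fun G : HC_S d => (G : (Fin d → ℂ) → ℂ) x) (hD i)
    simpa [HC_D_apply] using this
  have hc := is_const_of_fderiv_eq_zero (𝕜 := ℂ) (fun x => HC_S_diff H x) hf b 0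
  have e1 : ∀ x, (H : (Fin d → ℂ) → ℂ) x = (F : (Fin d → ℂ) → ℂ) x *
    Complex.exp (∑ i, (-c) i * x i) := fun x => rfl
  rw [e1, e1] at hc
  simp only [Pi.neg_apply, neg_mul, Finset.sum_neg_distrib, Complex.exp_neg, Pi.zero_apply,
    mul_zero, Finset.sum_const_zero, neg_zero, Complex.exp_zero, inv_one, mul_one] at hc
  rw [← hc, mul_assoc, inv_mul_cancel₀ (Complex.exp_ne_zero _), mul_one]

theorem HC_expand {d : ℕ} (hd : 1 ≤ d) (F : HC_S d) (a : Fin d → ℂ) (ha : Function.Injective a)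
    (h : ∀ i, HC_rho d (∏ j, (MvPolynomial.X i - MvPolynomial.C (a j))) F = 0) :
    ∃ c : (Fin d → Fin d) → ℂ, ∀ b, (F : (Fin d → ℂ) → ℂ) b =
      ∑ σ, c σ * Complex.exp (∑ i, a (σ i) * b i) := by
  haveI : Nonempty (Fin d) := ⟨⟨0, hd⟩⟩
  set L : Fin d → Fin d → MvPolynomial (Fin d) ℂ := fun i j =>
    Polynomial.aeval (MvPolynomial.X i) (Lagrange.basis Finset.univ a j) with hL
  have hsum : ∀ i, ∑ j, L i j = 1 := by
    intro i
    rw [hL, ← map_sum, Lagrange.sum_basis ha.injOn Finset.univ_nonempty, map_one]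
  have hLk : ∀ i j, ∃ e : MvPolynomial (Fin d) ℂ, (MvPolynomial.X i - MvPolynomial.C (a j)) * L i j =
      e * ∏ k, (MvPolynomial.X i - MvPolynomial.C (a k)) := by
    intro i j
    refine ⟨MvPolynomial.C (Lagrange.nodalWeight Finset.univ a j), ?_⟩
    have h1 := Lagrange.nodal_eq_mul_nodal_erase (s := Finset.univ) (v := a) (Finset.mem_univ j)
    have h2 := Lagrange.basis_eq_prod_sub_inv_mul_nodal_div (s := Finset.univ) (v := a) (Finset.mem_univ j)
    have h3 : (Polynomial.X - Polynomial.C (a j)) * Lagrange.basis Finset.univ a j =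
      Polynomial.C (Lagrange.nodalWeight Finset.univ a j) * Lagrange.nodal Finset.univ a := by
      rw [h2, ← Lagrange.nodal_erase_eq_nodal_div (Finset.mem_univ j), h1]
      ring
    have h4 := congrArg (Polynomial.aeval (MvPolynomial.X i : MvPolynomial (Fin d) ℂ)) h3
    rw [Lagrange.nodal] at h4
    simpa [MvPolynomial.algebraMap_eq, map_prod, Polynomial.aeval_C] using h4
  set G : (Fin d → Fin d) → HC_S d := fun σ => HC_rho d (∏ i, L i (σ i)) F with hG
  have hFG : F = ∑ σ, G σ := by
    have h1 : (1 : MvPolynomial (Fin d) ℂ) = ∑ σ : Fin d → Fin d, ∏ i, L i (σ i) := by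
      have := Finset.prod_univ_sum (fun _ : Fin d => (Finset.univ : Finset (Fin d))) L
      rw [Finset.prod_congr rfl (fun i _ => hsum i), Finset.prod_const_one] at this
      rw [this, Fintype.piFinset_univ]
    have h2 : HC_rho d 1 F = F := by rw [map_one, Module.End.one_apply]
    rw [h1, map_sum, LinearMap.sum_apply] at h2
    exact h2.symm
  have hDG : ∀ σ i, HC_D i (G σ) = a (σ i) • G σ := by
    intro σ i
    obtain ⟨e, he⟩ := hLk i (σ i)
    have h1 : HC_rho d ((MvPolynomial.X i - MvPolynomial.C (a (σ i))) * ∏ i, L i (σ i)) F = 0 := by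
      rw [← Finset.mul_prod_erase _ _ (Finset.mem_univ i), ← mul_assoc, he, mul_comm, ← mul_assoc,
        HC_rho_mul, h i, map_zero]
    rw [HC_rho_mul, map_sub, LinearMap.sub_apply, HC_rho_X, HC_rho_C, sub_eq_zero] at h1
    exact h1
  refine ⟨fun σ => (G σ : (Fin d → ℂ) → ℂ) 0, fun b => ?_⟩
  have h1 : (F : (Fin d → ℂ) → ℂ) b = ∑ σ, (G σ : (Fin d → ℂ) → ℂ) b := by
    conv_lhs => rw [hFG]
    simp
  rw [h1]
  exact Finset.sum_congr rfl fun σ _ => HC_eigen (G σ) _ (hDG σ) b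

/-- antisymmetric exponential sums are multiples of the determinant -/
theorem HC_antisymm {d : ℕ} (F : (Fin d → ℂ) → ℂ) (a : Fin d → ℂ)
    (hF : ∀ (τ : Equiv.Perm (Fin d)) b, F (b ∘ τ) = (Equiv.Perm.sign τ : ℤ) * F b)
    (c : (Fin d → Fin d) → ℂ) (hc : ∀ b, F b = ∑ σ, c σ * Complex.exp (∑ i, a (σ i) * b i)) :
    ∃ C : ℂ, ∀ b, F b = C * (Matrix.of fun j k : Fin d => Complex.exp (a j * b k)).det := by
  have hdet : ∀ σ : Fin d → Fin d, ∃ e : ℂ, ∀ b : Fin d → ℂ,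
      (Matrix.of fun j k : Fin d => Complex.exp (a (σ j) * b k)).det =
        e * (Matrix.of fun j k : Fin d => Complex.exp (a j * b k)).det := by
    intro σ
    by_cases hσ : Function.Injective σ
    · let π : Equiv.Perm (Fin d) := Equiv.ofBijective σ (Finite.injective_iff_bijective.1 hσ)
      refine ⟨(Equiv.Perm.sign π : ℤ), fun b => ?_⟩
      rw [← Matrix.det_permute]
      rfl
    · refine ⟨0, fun b => ?_⟩
      rw [zero_mul]
      simp only [Function.Injective, not_forall] at hσ
      obtain ⟨i, j, hij, hne⟩ := hσ
      refine Matrix.det_zero_of_row_eq hne ?_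
      funext k
      simp [hij]
  choose e he using hdet
  refine ⟨(∑ σ, c σ * e σ) / (Fintype.card (Equiv.Perm (Fin d)) : ℂ), fun b => ?_⟩
  have hne : (Fintype.card (Equiv.Perm (Fin d)) : ℂ) ≠ 0 := by
    exact_mod_cast Fintype.card_ne_zero
  rw [div_mul_eq_mul_div, eq_div_iff hne]
  have h1 : F b * (Fintype.card (Equiv.Perm (Fin d)) : ℂ) =
      ∑ τ : Equiv.Perm (Fin d), ((Equiv.Perm.sign τ : ℤ) : ℂ) * F (b ∘ τ) := by
    have : ∀ τ : Equiv.Perm (Fin d), ((Equiv.Perm.sign τ : ℤ) : ℂ) * F (b ∘ τ) = F b := by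
      intro τ
      rw [hF, ← mul_assoc, ← Int.cast_mul, ← Units.val_mul, Int.units_mul_self]
      simp
    simp only [this, Finset.sum_const, Finset.card_univ, nsmul_eq_mul]
    ring
  rw [h1]
  simp only [hc, Finset.mul_sum, Finset.sum_mul]
  rw [Finset.sum_comm]
  refine Finset.sum_congr rfl fun σ _ => ?_
  rw [mul_assoc, ← he, ← det_transpose, det_apply', Finset.mul_sum]
  refine Finset.sum_congr rfl fun τ _ => ?_
  simp only [transpose_apply, of_apply, Complex.exp_sum, Function.comp]
  ring

theorem HC_vdm_prod {d : ℕ} (a : Fin d → ℂ) : vandermondeProd a = (vandermonde a).det := by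
  rw [det_vandermonde, vandermondeProd, Finset.prod_filter, Fintype.prod_prod_type, Finset.prod_comm]
  refine Finset.prod_congr rfl fun i _ => ?_
  rw [← Finset.prod_filter]
  refine Finset.prod_congr ?_ fun _ _ => rfl
  ext j
  simp

theorem HC_prod_const {d : ℕ} (z : ℂ) :
    ∏ i : Fin d, ∏ _j ∈ Finset.Ioi i, z = z ^ ((d ^ 2 - d) / 2) := by
  simp only [Finset.prod_const, Fin.card_Ioi]
  rw [Finset.prod_pow_eq_pow_sum]
  congr 1
  rw [Fin.sum_univ_eq_sum_range (fun i => d - 1 - i) d, Finset.sum_range_reflect (fun i => i) d,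
    Finset.sum_range_id, Nat.mul_sub, mul_one, sq]

theorem HC_vdm_smul {d : ℕ} (z : ℂ) (b : Fin d → ℂ) :
    (vandermonde (fun i => z * b i)).det = z ^ ((d ^ 2 - d) / 2) * (vandermonde b).det := by
  rw [det_vandermonde, det_vandermonde, ← HC_prod_const, ← Finset.prod_mul_distrib]
  refine Finset.prod_congr rfl fun i _ => ?_
  rw [← Finset.prod_mul_distrib]
  refine Finset.prod_congr rfl fun j _ => ?_
  ring

theorem HC_sf {d : ℕ} (hd : 1 ≤ d) : (vandermonde (fun i : Fin d => (i : ℂ))).det =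
    ∏ j ∈ Finset.range d, (Nat.factorial j : ℂ) := by
  obtain ⟨n, rfl⟩ : ∃ n, d = n + 1 := ⟨d - 1, by omega⟩
  rw [det_vandermonde_id_eq_superFactorial, Finset.prod_range_succ',
    ← Nat.prod_range_factorial_succ]
  push_cast
  simp [Nat.factorial_succ]

theorem HC_const {d : ℕ} (hd : 1 ≤ d) (I : (Fin d → ℂ) → ℂ) (hI : Continuous I) (hI0 : I 0 = 1)
    (a : Fin d → ℂ) (C : ℂ)
    (h : ∀ b, (vandermonde b).det * I b =
      C * (Matrix.of fun j k : Fin d => Complex.exp (a j * b k)).det) :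
    ∏ j ∈ Finset.range d, (Nat.factorial j : ℂ) = C * (vandermonde a).det := by
  have h1 : ∀ ε : ℂ, ε ≠ 0 → (vandermonde (fun i : Fin d => (i : ℂ))).det *
      I (fun i => ε * (i : ℂ)) = C * ∏ i : Fin d, ∏ j ∈ Finset.Ioi i,
        (ε⁻¹ * (Complex.exp (ε * a j) - Complex.exp (ε * a i))) := by
    intro ε hε
    have h2 := h (fun i => ε * (i : ℂ))
    have h3 : (Matrix.of fun j k : Fin d => Complex.exp (a j * (ε * (k : ℂ)))) =
        vandermonde fun j => Complex.exp (ε * a j) := by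
      ext j k
      rw [of_apply, vandermonde_apply, ← Complex.exp_nat_mul]
      congr 1
      ring
    rw [HC_vdm_smul, h3, det_vandermonde (fun j => Complex.exp (ε * a j))] at h2
    have hz := HC_prod_const (d := d) ε⁻¹
    simp only [Finset.prod_mul_distrib]
    rw [hz, inv_pow]
    have hne : ε ^ ((d ^ 2 - d) / 2) ≠ 0 := pow_ne_zero _ hε
    field_simp
    linear_combination h2
  have l1 : Filter.Tendsto (fun ε : ℂ => (vandermonde (fun i : Fin d => (i : ℂ))).det *
      I (fun i => ε * (i : ℂ))) (nhdsWithin 0 {0}ᶜ)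
      (nhds ((vandermonde (fun i : Fin d => (i : ℂ))).det * 1)) := by
    have hc : Continuous (fun ε : ℂ => (vandermonde (fun i : Fin d => (i : ℂ))).det *
      I (fun i => ε * (i : ℂ))) := by
      refine continuous_const.mul (hI.comp ?_)
      fun_prop
    have := (hc.tendsto 0).mono_left (nhdsWithin_le_nhds (s := {0}ᶜ))
    have e : (fun i : Fin d => (0 : ℂ) * (i : ℂ)) = 0 := by funext i; simp
    rw [e, hI0] at this
    exact this
  have l2 : Filter.Tendsto (fun ε : ℂ => C * ∏ i : Fin d, ∏ j ∈ Finset.Ioi i,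
        (ε⁻¹ * (Complex.exp (ε * a j) - Complex.exp (ε * a i)))) (nhdsWithin 0 {0}ᶜ)
      (nhds (C * (vandermonde a).det)) := by
    rw [det_vandermonde]
    refine Filter.Tendsto.const_mul _ ?_
    refine tendsto_finsetProd _ fun i _ => ?_
    refine tendsto_finsetProd _ fun j _ => ?_
    have hd1 : ∀ c : ℂ, HasDerivAt (fun ε : ℂ => Complex.exp (ε * c)) c 0 := by
      intro c
      have := ((hasDerivAt_id (0:ℂ)).mul_const c).cexp
      refine this.congr_deriv ?_
      simp
    have := ((hd1 (a j)).sub (hd1 (a i))).tendsto_slope_zero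
    simpa using this
  have l3 := l1.congr' (f₂ := fun ε : ℂ => C * ∏ i : Fin d, ∏ j ∈ Finset.Ioi i,
        (ε⁻¹ * (Complex.exp (ε * a j) - Complex.exp (ε * a i)))) (by
    filter_upwards [self_mem_nhdsWithin] with ε hε
    exact h1 ε hε)
  have := tendsto_nhds_unique l3 l2
  rw [mul_one, HC_sf hd] at this
  exact this

section
variable {d : ℕ} [MeasurableSpace (Matrix.unitaryGroup (Fin d) ℂ)]
    [BorelSpace (Matrix.unitaryGroup (Fin d) ℂ)]
    (μ : Measure (Matrix.unitaryGroup (Fin d) ℂ)) [IsProbabilityMeasure μ]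
    (A : Matrix (Fin d) (Fin d) ℂ)

theorem HC_trans (hμ : ∀ W : Matrix.unitaryGroup (Fin d) ℂ,
      Measure.map (fun U : Matrix.unitaryGroup (Fin d) ℂ => W * U) μ = μ)
    (W : Matrix.unitaryGroup (Fin d) ℂ) (f : Matrix.unitaryGroup (Fin d) ℂ → ℂ)
    (hf : Continuous f) : ∫ U, f U ∂μ = ∫ U, f (W * U) ∂μ := by
  conv_lhs => rw [← hμ W]
  have hc : Continuous fun U : Matrix.unitaryGroup (Fin d) ℂ => W * U := continuous_const.mul continuous_id
  rw [integral_map hc.aemeasurable hf.aestronglyMeasurable]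

theorem HC_I_perm (hμ : ∀ W : Matrix.unitaryGroup (Fin d) ℂ,
      Measure.map (fun U : Matrix.unitaryGroup (Fin d) ℂ => W * U) μ = μ)
    (τ : Equiv.Perm (Fin d)) (b : Fin d → ℂ) :
    HC_E μ A (fun _ => 1) (b ∘ τ) = HC_E μ A (fun _ => 1) b := by
  set P : Matrix (Fin d) (Fin d) ℂ := (1 : Matrix (Fin d) (Fin d) ℂ).submatrix τ.symm id with hP
  have hPM : ∀ M : Matrix (Fin d) (Fin d) ℂ, P * M * Pᴴ = M.submatrix τ.symm τ.symm := by
    intro M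
    ext i j
    simp [hP, Matrix.mul_apply, one_apply]
  have hPu : P ∈ Matrix.unitaryGroup (Fin d) ℂ := by
    rw [Matrix.mem_unitaryGroup_iff]
    have := hPM 1
    rw [mul_one] at this
    rw [star_eq_conjTranspose, this, submatrix_one_equiv]
  set W : Matrix.unitaryGroup (Fin d) ℂ := ⟨P, hPu⟩
  unfold HC_E
  have hM := HC_conj_continuous A
  have hc : Continuous fun U => (1 : ℂ) * Complex.exp (∑ i, b i * HC_conj A U i i) := by fun_prop
  have e := HC_trans μ hμ W _ hc
  refine Eq.trans ?_ e.symm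
  congr 1
  funext U
  congr 2
  have h1 : HC_conj A (W * U) = (HC_conj A U).submatrix τ.symm τ.symm := by
    rw [← hPM]
    unfold HC_conj
    change P * (U : Matrix (Fin d) (Fin d) ℂ) * A * (P * (U : Matrix (Fin d) (Fin d) ℂ))ᴴ = _
    rw [conjTranspose_mul]
    simp only [mul_assoc]
  rw [h1, ← Equiv.sum_comp τ (fun i => b i * (HC_conj A U).submatrix τ.symm τ.symm i i)]
  simp

end

/-- Harish-Chandra/Itzykson–Zuber formula.  Let `d ≥ 1`, `z ∈ ℂ`, `z ≠ 0`,
let `μ` be the normalized Haar (probability) measure on the unitary group `U(d)` (formalized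
as a Borel probability measure invariant under left translations, which characterizes it
uniquely), and let `A`, `B` be normal `d × d` complex matrices with pairwise distinct
eigenvalues `a₁,…,a_d` resp. `b₁,…,b_d` (normality with the given eigenvalues being
formalized by a unitary diagonalization).  Then
`∫_{U(d)} exp(z·tr(A U* B U)) dμ(U)
  = (∏_{j=1}^{d-1} j!) · det(exp(z·a_j·b_k))_{j,k} / (z^{(d²-d)/2}·Δ(A)·Δ(B))`. -/
theorem harish_chandra_itzykson_zuber (d : ℕ) (hd : 1 ≤ d) (z : ℂ) (hz : z ≠ 0)
    [MeasurableSpace (Matrix.unitaryGroup (Fin d) ℂ)]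
    [BorelSpace (Matrix.unitaryGroup (Fin d) ℂ)]
    (μ : Measure (Matrix.unitaryGroup (Fin d) ℂ)) [IsProbabilityMeasure μ]
    (hμ : ∀ W : Matrix.unitaryGroup (Fin d) ℂ,
      Measure.map (fun U : Matrix.unitaryGroup (Fin d) ℂ => W * U) μ = μ)
    (A B : Matrix (Fin d) (Fin d) ℂ) (a b : Fin d → ℂ)
    (ha : Function.Injective a) (hb : Function.Injective b)
    (hA : ∃ W : Matrix.unitaryGroup (Fin d) ℂ,
      A = (W : Matrix (Fin d) (Fin d) ℂ) * Matrix.diagonal a * (W : Matrix (Fin d) (Fin d) ℂ)ᴴ)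
    (hB : ∃ W : Matrix.unitaryGroup (Fin d) ℂ,
      B = (W : Matrix (Fin d) (Fin d) ℂ) * Matrix.diagonal b *
        (W : Matrix (Fin d) (Fin d) ℂ)ᴴ) :
    ∫ U : Matrix.unitaryGroup (Fin d) ℂ,
        Complex.exp (z * (A * (U : Matrix (Fin d) (Fin d) ℂ)ᴴ * B *
          (U : Matrix (Fin d) (Fin d) ℂ)).trace) ∂μ
      = (∏ j ∈ Finset.range d, (Nat.factorial j : ℂ)) *
          (Matrix.of fun j k : Fin d => Complex.exp (z * a j * b k)).det /
          (z ^ ((d ^ 2 - d) / 2) * vandermondeProd a * vandermondeProd b) := by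
  have hIc := HC_E_contDiff μ A (fun _ => 1) continuous_const
  have hF := HC_kill μ A hμ a hA
  obtain ⟨c, hc⟩ := HC_expand hd (HC_V id * HC_I μ A) a ha hF
  have hFb : ∀ x : Fin d → ℂ, ((HC_V id * HC_I μ A : HC_S d) : (Fin d → ℂ) → ℂ) x =
      (vandermonde x).det * HC_E μ A (fun _ => 1) x := fun x => rfl
  obtain ⟨C, hC⟩ := HC_antisymm _ a (by
    intro τ x
    rw [hFb, hFb, HC_I_perm μ A hμ τ x, ← mul_assoc, ← Matrix.det_permute]
    rfl) c hc
  have hI0 : HC_E μ A (fun _ => 1) 0 = 1 := by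
    simp [HC_E]
  have hC' : ∀ x : Fin d → ℂ, (vandermonde x).det * HC_E μ A (fun _ => 1) x =
      C * (Matrix.of fun j k : Fin d => Complex.exp (a j * x k)).det := fun x => by
    rw [← hC x, hFb]
  have hcon := HC_const hd _ hIc.continuous hI0 a C hC'
  have hz1 := hC' (fun i => z * b i)
  rw [HC_vdm_smul] at hz1
  have hLHS : ∫ U : Matrix.unitaryGroup (Fin d) ℂ,
        Complex.exp (z * (A * (U : Matrix (Fin d) (Fin d) ℂ)ᴴ * B *
          (U : Matrix (Fin d) (Fin d) ℂ)).trace) ∂μ = HC_E μ A (fun _ => 1) (fun i => z * b i) := by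
    obtain ⟨W, rfl⟩ := hB
    rw [HC_trans μ hμ W _ (by fun_prop)]
    unfold HC_E
    congr 1
    funext U
    rw [one_mul]
    congr 1
    have hW : (W : Matrix (Fin d) (Fin d) ℂ)ᴴ * (W : Matrix (Fin d) (Fin d) ℂ) = 1 :=
      Matrix.mem_unitaryGroup_iff'.1 W.2
    have e1 : A * ((W * U : Matrix.unitaryGroup (Fin d) ℂ) : Matrix (Fin d) (Fin d) ℂ)ᴴ *
        ((W : Matrix (Fin d) (Fin d) ℂ) * diagonal b * (W : Matrix (Fin d) (Fin d) ℂ)ᴴ) *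
        ((W * U : Matrix.unitaryGroup (Fin d) ℂ) : Matrix (Fin d) (Fin d) ℂ) =
        (A * (U : Matrix (Fin d) (Fin d) ℂ)ᴴ * diagonal b) * (U : Matrix (Fin d) (Fin d) ℂ) := by
      change A * ((W : Matrix (Fin d) (Fin d) ℂ) * (U : Matrix (Fin d) (Fin d) ℂ))ᴴ *
        ((W : Matrix (Fin d) (Fin d) ℂ) * diagonal b * (W : Matrix (Fin d) (Fin d) ℂ)ᴴ) *
        ((W : Matrix (Fin d) (Fin d) ℂ) * (U : Matrix (Fin d) (Fin d) ℂ)) = _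
      rw [conjTranspose_mul]
      calc _ = A * (U : Matrix (Fin d) (Fin d) ℂ)ᴴ * ((W : Matrix (Fin d) (Fin d) ℂ)ᴴ *
            (W : Matrix (Fin d) (Fin d) ℂ)) * diagonal b * ((W : Matrix (Fin d) (Fin d) ℂ)ᴴ *
            (W : Matrix (Fin d) (Fin d) ℂ)) * (U : Matrix (Fin d) (Fin d) ℂ) := by
            simp only [mul_assoc]
        _ = _ := by rw [hW, mul_one, mul_one]
    rw [e1, Matrix.trace_mul_comm, ← mul_assoc, ← mul_assoc]
    simp only [Matrix.trace, diag_apply, mul_diagonal, Finset.mul_sum]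
    refine Finset.sum_congr rfl fun i _ => ?_
    unfold HC_conj
    ring
  have hda : (vandermonde a).det ≠ 0 := det_vandermonde_ne_zero_iff.2 ha
  have hdb : (vandermonde b).det ≠ 0 := det_vandermonde_ne_zero_iff.2 hb
  rw [hLHS, HC_vdm_prod, HC_vdm_prod, hcon, eq_div_iff (mul_ne_zero (mul_ne_zero (pow_ne_zero _ hz) hda) hdb)]
  have hmat : (Matrix.of fun j k : Fin d => Complex.exp (a j * (z * b k))) =
      Matrix.of fun j k : Fin d => Complex.exp (z * a j * b k) := by
    ext j k
    rw [of_apply, of_apply]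
    congr 1
    ring
  rw [hmat] at hz1
  linear_combination (vandermonde a).det * hz1
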